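/- Let k be an algebraically closed field of characteristic p and fix g ≥ 1. The number of isomorphism classes of quadruples (M, F, V, ⟨·,·⟩) with dim_k M = 2g — where isomorphisms are k-linear bijections commuting with F and V and taking one alternating form to the other — is exactly 2^g. -/

import Mathlib

open Module

instance frobenius_surjective_inst (p : ℕ) [Fact p.Prime] (k : Type*) [Field k] [CharP k p]
    [PerfectRing k p] : RingHomSurjective (frobenius k p) :=
  ⟨(frobeniusEquiv k p).surjective⟩

instance frobeniusEquiv_symm_surjective_inst (p : ℕ) [Fact p.Prime] (k : Type*) [Field k]
    [CharP k p] [PerfectRing k p] :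
    RingHomSurjective ((frobeniusEquiv k p).symm : k →+* k) :=
  ⟨(frobeniusEquiv k p).symm.surjective⟩

/-- A quadruple `(M, F, V, ⟨·,·⟩)`: a finite-dimensional `k`-vector space `M` of dimension
`2g`, a Frobenius-semilinear `F : M → M`, an inverse-Frobenius-semilinear `V : M → M` with
`ker F = im V` and `ker V = im F`, and a nondegenerate alternating bilinear form
`⟨·,·⟩ = B` on `M` with `⟨F x, y⟩ = ⟨x, V y⟩ ^ p`.  (These are the Dieudonné spaces of
principally quasi-polarized BT₁ group schemes over `k`.) -/
structure PolarizedBT1Space (p : ℕ) [Fact p.Prime] (k : Type) [Field k] [CharP k p]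
    [PerfectRing k p] (g : ℕ) where
  M : Type
  [addCommGroup : AddCommGroup M]
  [module : Module k M]
  [finiteDimensional : FiniteDimensional k M]
  hdim : finrank k M = 2 * g
  F : M →ₛₗ[frobenius k p] M
  V : M →ₛₗ[((frobeniusEquiv k p).symm : k →+* k)] M
  hFV : LinearMap.ker F = LinearMap.range V
  hVF : LinearMap.ker V = LinearMap.range F
  B : M →ₗ[k] M →ₗ[k] k
  halt : ∀ x, B x x = 0
  hnondeg : ∀ x, (∀ y, B x y = 0) → x = 0
  hcompat : ∀ x y, B (F x) y = (B x (V y)) ^ p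

attribute [instance] PolarizedBT1Space.addCommGroup PolarizedBT1Space.module
  PolarizedBT1Space.finiteDimensional

/-- Two quadruples are isomorphic if there is a `k`-linear bijection commuting with `F` and
`V` and taking one alternating form to the other. -/
def PolarizedBT1Space.Iso {p : ℕ} [Fact p.Prime] {k : Type} [Field k] [CharP k p]
    [PerfectRing k p] {g : ℕ} (X Y : PolarizedBT1Space p k g) : Prop :=
  ∃ α : X.M ≃ₗ[k] Y.M, (∀ x, α (X.F x) = Y.F (α x)) ∧ (∀ x, α (X.V x) = Y.V (α x)) ∧
    ∀ x y, Y.B (α x) (α y) = X.B x y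

open Module Polynomial

set_option linter.unusedSectionVars false

section semi
variable {p : ℕ} [Fact p.Prime] {k : Type} [Field k] [CharP k p]

noncomputable def qpoly (p : ℕ) {k : Type} [Field k] (c : k) (a : ℕ → k) : ℕ → k[X]
  | 0 => C c + C (a 0) * X ^ p
  | (j+1) => qpoly p c a j ^ p + C (a (j+1)) * X ^ p

theorem qpoly_deriv (c : k) (a : ℕ → k) (j : ℕ) : derivative (qpoly p c a j) = 0 := by
  cases j <;> simp [qpoly, derivative_pow]

theorem exists_root_qpoly [IsAlgClosed k] (c : k) (a : ℕ → k) (j : ℕ) :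
    ∃ z, (qpoly p c a j).eval z = z := by
  have h : (qpoly p c a j - X).degree ≠ 0 := by
    intro h
    have h1 := eq_C_of_degree_eq_zero h
    have h2 : derivative (qpoly p c a j - X) = -1 := by simp [qpoly_deriv]
    rw [h1] at h2
    simp at h2
  obtain ⟨z, hz⟩ := IsAlgClosed.exists_root _ h
  refine ⟨z, ?_⟩
  simpa [IsRoot, sub_eq_zero] using hz

theorem qpoly_natDegree (a : ℕ → k) (h0 : a 0 ≠ 0) (j : ℕ) :
    (qpoly p 0 a j).natDegree = p ^ (j+1) := by
  have hp : 1 < p := (Fact.out : p.Prime).one_lt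
  induction j with
  | zero => simp [qpoly, natDegree_C_mul_X_pow _ _ h0]
  | succ j ih =>
    have h1 : (qpoly p 0 a j ^ p).natDegree = p ^ (j+1+1) := by
      rw [natDegree_pow, ih]; ring
    rw [qpoly, natDegree_add_eq_left_of_natDegree_lt, h1]
    rw [h1]
    refine lt_of_le_of_lt (natDegree_C_mul_X_pow_le _ _) ?_
    calc p = p ^ 1 := (pow_one p).symm
      _ < p ^ (j+1+1) := Nat.pow_lt_pow_right hp (by omega)

theorem exists_nonzero_root_qpoly [IsAlgClosed k] (a : ℕ → k) (h0 : a 0 ≠ 0) (j : ℕ) :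
    ∃ z, z ≠ 0 ∧ (qpoly p 0 a j).eval z = z := by
  have hp : 1 < p := (Fact.out : p.Prime).one_lt
  have he : (qpoly p 0 a j).eval 0 = 0 := by
    induction j with
    | zero => simp [qpoly, (Fact.out : p.Prime).ne_zero]
    | succ j ih => simp [qpoly, ih, (Fact.out : p.Prime).ne_zero]
  have hX : X ∣ (qpoly p 0 a j - X) := by
    rw [X_dvd_iff, coeff_zero_eq_eval_zero]; simp [he]
  obtain ⟨R, hR⟩ := hX
  have hd : derivative (qpoly p 0 a j - X) = -1 := by simp [qpoly_deriv]
  have hdeg : (qpoly p 0 a j - X).natDegree = p ^ (j+1) := by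
    rw [natDegree_sub_eq_left_of_natDegree_lt, qpoly_natDegree a h0]
    rw [qpoly_natDegree a h0, natDegree_X]
    exact Nat.one_lt_pow (by omega) hp
  have hRd : R.degree ≠ 0 := by
    intro h
    have h1 := eq_C_of_degree_eq_zero h
    rw [hR, h1] at hdeg
    have := natDegree_mul_le (p := (X : k[X])) (q := C (R.coeff 0))
    rw [hdeg] at this
    simp at this
    have := Nat.one_lt_pow (n := j + 1) (by omega) hp
    omega
  obtain ⟨z, hz⟩ := IsAlgClosed.exists_root _ hRd
  refine ⟨z, ?_, ?_⟩
  · rintro rfl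
    rw [hR] at hd
    have := congrArg (eval 0) hd
    have hz' : eval 0 R = 0 := hz
    simp [hz'] at this
  · have := congrArg (eval z) hR
    have hz' : eval z R = 0 := hz
    simp [hz', sub_eq_zero] at this
    exact this

variable {Q : Type} [AddCommGroup Q] [Module k Q]

theorem lemmaK (f : Q →ₛₗ[frobenius k p] Q) (ν γ : Q) (m : ℕ) (a : ℕ → k)
    (h : f^[m+1] ν = γ + ∑ j ∈ Finset.range (m+1), a j • f^[j] ν) (c z : k)
    (hz : (qpoly p c a m).eval z = z) :
    (∑ j ∈ Finset.range (m+1), (qpoly p c a j).eval z • f^[j] ν) -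
      f (∑ j ∈ Finset.range (m+1), (qpoly p c a j).eval z • f^[j] ν) = c • ν - z ^ p • γ := by
  have h1 : f (∑ j ∈ Finset.range (m+1), (qpoly p c a j).eval z • f^[j] ν) =
      ∑ j ∈ Finset.range (m+1), ((qpoly p c a j).eval z)^p • f^[j+1] ν := by
    rw [map_sum]
    refine Finset.sum_congr rfl fun j _ => ?_
    rw [map_smulₛₗ, frobenius_def, Function.iterate_succ_apply']
  rw [h1, Finset.sum_range_succ (fun j => ((qpoly p c a j).eval z)^p • f^[j+1] ν),
    Finset.sum_range_succ' (fun j => (qpoly p c a j).eval z • f^[j] ν), hz]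
  have h2 : ∑ j ∈ Finset.range m, (qpoly p c a (j+1)).eval z • f^[j+1] ν =
      ∑ j ∈ Finset.range m, ((qpoly p c a j).eval z)^p • f^[j+1] ν +
      z ^ p • ∑ j ∈ Finset.range m, a (j+1) • f^[j+1] ν := by
    rw [Finset.smul_sum, ← Finset.sum_add_distrib]
    refine Finset.sum_congr rfl fun j _ => ?_
    simp only [qpoly, eval_add, eval_pow, eval_mul, eval_C, eval_X]
    module
  have h3 := Finset.sum_range_succ' (fun j => a j • f^[j] ν) m
  rw [h2, h, h3]
  simp only [Function.iterate_zero, id, qpoly, eval_add, eval_pow, eval_mul, eval_C, eval_X]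
  module

theorem exists_dep [FiniteDimensional k Q] (f : Q →ₛₗ[frobenius k p] Q) (G : Submodule k Q) (ν : Q) :
    ∃ n : ℕ, ∃ γ ∈ G, ∃ a : ℕ → k, f^[n] ν = γ + ∑ j ∈ Finset.range n, a j • f^[j] ν := by
  let A : ℕ →o Submodule k Q :=
    ⟨fun n => G ⊔ Submodule.span k ((fun j => f^[j] ν) '' (Finset.range n : Set ℕ)), by
      intro m n h
      refine sup_le_sup le_rfl (Submodule.span_mono (Set.image_mono ?_))
      intro x hx
      simp at hx ⊢
      omega⟩
  obtain ⟨n, hn⟩ := monotone_stabilizes_iff_noetherian.mpr (inferInstance : IsNoetherian k Q) A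
  have h1 : f^[n] ν ∈ A (n+1) :=
    Submodule.mem_sup_right (Submodule.subset_span ⟨n, by simp, rfl⟩)
  rw [← hn (n+1) (by omega)] at h1
  obtain ⟨γ, hγ, y, hy, hs⟩ := Submodule.mem_sup.mp h1
  rw [Submodule.mem_span_image_finset_iff_exists_fun] at hy
  obtain ⟨a, ha⟩ := hy
  refine ⟨n, γ, hγ, fun j => if h : j ∈ Finset.range n then a ⟨j, h⟩ else 0, ?_⟩
  rw [← hs, ← ha]
  congr 1
  rw [← Finset.sum_coe_sort (Finset.range n)]
  refine Finset.sum_congr rfl fun j _ => ?_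
  simp only [Finset.coe_mem, dif_pos, Subtype.coe_eta]

theorem iter_mem (f : Q →ₛₗ[frobenius k p] Q) (S : Submodule k Q) (hS : ∀ x ∈ S, f x ∈ S) {ν : Q}
    (hν : ν ∈ S) (j : ℕ) : f^[j] ν ∈ S := by
  induction j with
  | zero => exact hν
  | succ j ih => rw [Function.iterate_succ_apply']; exact hS _ ih

theorem lemmaL [IsAlgClosed k] [FiniteDimensional k Q] (f : Q →ₛₗ[frobenius k p] Q)
    (S : Submodule k Q) (hS : ∀ x ∈ S, f x ∈ S) (ν : Q) (hν : ν ∈ S) :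
    ∃ u ∈ S, u - f u = ν := by
  obtain ⟨n, γ, hγ, a, h⟩ := exists_dep f ⊥ ν
  rw [Submodule.mem_bot] at hγ
  subst hγ
  cases n with
  | zero =>
    simp at h
    exact ⟨0, S.zero_mem, by simp [h]⟩
  | succ m =>
    obtain ⟨z, hz⟩ := exists_root_qpoly (p := p) 1 a m
    refine ⟨_, ?_, (lemmaK f ν 0 m a h 1 z hz).trans (by simp)⟩
    exact S.sum_mem fun j _ => S.smul_mem _ (iter_mem f S hS hν j)

theorem lemmaL0 [IsAlgClosed k] [PerfectRing k p] [FiniteDimensional k Q] (f : Q →ₛₗ[frobenius k p] Q)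
    (S G : Submodule k Q) (hS : ∀ x ∈ S, f x ∈ S) 
    (hinj : ∀ y ∈ S, f y ∈ G → y ∈ G) (ν : Q) (hν : ν ∈ S) (hνG : ν ∉ G) :
    ∃ x ∈ S, x ∉ G ∧ f x - x ∈ G := by
  classical
  have hex := exists_dep f G ν
  obtain ⟨γ, hγ, a, h⟩ := Nat.find_spec hex
  have hmin := fun m hm => Nat.find_min hex (m := m) hm
  generalize Nat.find hex = n at *
  cases n with
  | zero => simp at h; rw [h] at hνG; exact absurd hγ hνG
  | succ m =>
    have ha0 : a 0 ≠ 0 := by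
      intro ha0
      apply hmin m (by omega)
      have h1 : f (f^[m] ν - ∑ j ∈ Finset.range m, (frobeniusEquiv k p).symm (a (j+1)) • f^[j] ν) = γ := by
        rw [map_sub, ← Function.iterate_succ_apply' f, h, Finset.sum_range_succ', ha0, map_sum]
        simp only [map_smulₛₗ, frobenius_apply_frobeniusEquiv_symm, Function.iterate_succ_apply']
        simp
      have h2 := hinj _ (S.sub_mem (iter_mem f S hS hν m)
        (S.sum_mem fun j _ => S.smul_mem _ (iter_mem f S hS hν j))) (h1 ▸ hγ)
      exact ⟨_, h2, _, (sub_add_cancel _ _).symm⟩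
    obtain ⟨z, hz0, hz⟩ := exists_nonzero_root_qpoly (p := p) a ha0 m
    have hK := lemmaK f ν γ m a h 0 z hz
    refine ⟨∑ j ∈ Finset.range (m+1), (qpoly p 0 a j).eval z • f^[j] ν, S.sum_mem fun j _ => S.smul_mem _ (iter_mem f S hS hν j), ?_, ?_⟩
    rotate_left
    · rw [← neg_sub, hK]
      simpa using G.smul_mem _ hγ
    · intro hx
      apply hmin m (by omega)
      rw [Finset.sum_range_succ, hz] at hx
      refine ⟨_, G.smul_mem z⁻¹ hx, fun j => - (z⁻¹ * (qpoly p 0 a j).eval z), ?_⟩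
      rw [smul_add, Finset.smul_sum, smul_smul, inv_mul_cancel₀ hz0, one_smul, add_right_comm, ← Finset.sum_add_distrib]
      rw [Finset.sum_eq_zero, zero_add]
      intro j _
      rw [smul_smul, neg_smul, add_neg_cancel]

/-- fixed vectors span, relative version -/
theorem lemmaL2 [IsAlgClosed k] [PerfectRing k p] [FiniteDimensional k Q] (f : Q →ₛₗ[frobenius k p] Q)
    (S N : Submodule k Q) (hS : ∀ x ∈ S, f x ∈ S) (hNS : N ≤ S) (hN : ∀ x ∈ N, f x ∈ N)
    (hinj : ∀ y ∈ S, f y ∈ N → y ∈ N) :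
    S ≤ N ⊔ Submodule.span k {x | x ∈ S ∧ f x = x} := by
  set T := Submodule.span k {x | x ∈ S ∧ f x = x} with hT
  have hTS : T ≤ S := Submodule.span_le.mpr fun x hx => hx.1
  have key : ∀ x ∈ T, f x ∈ T ∧ ∃ y ∈ T, f y = x := by
    intro x hx
    induction hx using Submodule.span_induction with
    | mem x hx => exact ⟨by rw [hx.2]; exact Submodule.subset_span hx, x, Submodule.subset_span hx, hx.2⟩
    | zero => exact ⟨by simp, 0, T.zero_mem, by simp⟩
    | add x y _ _ hx hy =>
      obtain ⟨h1, u, hu, rfl⟩ := hx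
      obtain ⟨h2, v, hv, rfl⟩ := hy
      exact ⟨by rw [map_add]; exact T.add_mem h1 h2, u + v, T.add_mem hu hv, by rw [map_add]⟩
    | smul a x _ hx =>
      obtain ⟨h1, u, hu, rfl⟩ := hx
      refine ⟨by rw [map_smulₛₗ]; exact T.smul_mem _ h1, (frobeniusEquiv k p).symm a • u, T.smul_mem _ hu, ?_⟩
      rw [map_smulₛₗ, frobenius_apply_frobeniusEquiv_symm]
  set G := N ⊔ T with hG
  have hGf : ∀ x ∈ G, f x ∈ G := by
    intro x hx
    obtain ⟨y, hy, z, hz, rfl⟩ := Submodule.mem_sup.mp hx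
    rw [map_add]
    exact G.add_mem (Submodule.mem_sup_left (hN y hy)) (Submodule.mem_sup_right (key z hz).1)
  have hGinj : ∀ y ∈ S, f y ∈ G → y ∈ G := by
    intro y hy hfy
    obtain ⟨n, hn, t, ht, h⟩ := Submodule.mem_sup.mp hfy
    obtain ⟨-, s, hs, rfl⟩ := key t ht
    have : y - s ∈ N := hinj _ (S.sub_mem hy (hTS hs)) (by rw [map_sub, ← h]; simpa using hn)
    rw [← sub_add_cancel y s]
    exact G.add_mem (Submodule.mem_sup_left this) (Submodule.mem_sup_right hs)
  intro ν hν
  by_contra hνG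
  obtain ⟨x, hx, hxG, hxx⟩ := lemmaL0 f S G hS hGinj ν hν hνG
  obtain ⟨u, hu, huu⟩ := lemmaL f G hGf _ hxx
  apply hxG
  have : x + u ∈ T := Submodule.subset_span ⟨S.add_mem hx (sup_le hNS hTS hu), by
    rw [map_add]
    have : f u = u - (f x - x) := by rw [← huu]; abel
    rw [this]; abel⟩
  have h2 := G.sub_mem (Submodule.mem_sup_right this) hu
  simpa using h2

end semi

section torus
variable {p : ℕ} [Fact p.Prime] {k : Type} [Field k] [CharP k p] [IsAlgClosed k]
variable {ι : Type} [Finite ι] 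

theorem torus (π : Equiv.Perm ι) (r : ι → ι) (hr : ∀ i, r (r i) = i) (hπr : ∀ i, π (r i) = r (π i))
    (h : ι → Prop) (hh : ∀ i, h (r i) ↔ ¬ h i) (R μ : ι → k) (hR : ∀ i, R i ≠ 0) (hμ : ∀ i, μ i ≠ 0)
    (hμr : ∀ i, μ (r i) = μ i) (hRμ : ∀ i, R i * R (r i) * μ (π i) ^ p = μ i) :
    ∃ t : ι → k, (∀ i, t i ≠ 0) ∧ (∀ i, t i = R i * t (π i) ^ p) ∧ ∀ i, t i * t (r i) = μ i := by
  classical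
  have hp : 1 < p := (Fact.out : p.Prime).one_lt
  let t0 : ι → k := fun i => if h i then μ i else 1
  have ht0 : ∀ i, t0 i ≠ 0 := by intro i; simp only [t0]; split_ifs <;> simp [hμ]
  have ht0r : ∀ i, t0 i * t0 (r i) = μ i := by
    intro i; simp only [t0, hh]; by_cases hi : h i <;> simp [hi, hμr]
  let S : ι → k := fun i => R i * t0 (π i) ^ p / t0 i
  have hS0 : ∀ i, S i ≠ 0 := fun i => div_ne_zero (mul_ne_zero (hR i) (pow_ne_zero _ (ht0 _))) (ht0 _)
  have hS : ∀ i, S i * S (r i) = 1 := by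
    intro i
    have h1 := hRμ i
    rw [← ht0r (π i), ← ht0r i] at h1
    have h2 := ht0 i
    have h3 := ht0 (r i)
    simp only [S, hπr]
    field_simp
    rw [← h1]; ring
  let N := Nat.card (Equiv.Perm ι)
  have hN : 0 < N := Nat.card_pos
  have hpN : 0 < p ^ N - 1 := by
    have := Nat.one_lt_pow (n := N) (by omega) hp
    omega
  choose w hw using fun i => IsAlgClosed.exists_pow_nat_eq ((S i)⁻¹) hpN
  have hw0 : ∀ i, w i ≠ 0 := by
    intro i hi
    have := hw i
    rw [hi, zero_pow (by omega)] at this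
    exact inv_ne_zero (hS0 i) this.symm
  let u : ι → k := fun i => if h i then w i else (w (r i))⁻¹
  have hu0 : ∀ i, u i ≠ 0 := by intro i; simp only [u]; split_ifs <;> simp [hw0]
  have hur : ∀ i, u i * u (r i) = 1 := by
    intro i; simp only [u, hh]; by_cases hi : h i <;> simp [hi, hr, hw0]
  have huS : ∀ i, u i ^ (p ^ N - 1) * S i = 1 := by
    intro i; simp only [u]
    split_ifs with hi
    · rw [hw, inv_mul_cancel₀ (hS0 i)]
    · rw [inv_pow, hw, inv_inv, mul_comm, hS]
  let s : ι → k := fun i => ∏ j ∈ Finset.range N, u ((π ^ j) i) ^ (p ^ j)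
  have hs0 : ∀ i, s i ≠ 0 := fun i => Finset.prod_ne_zero_iff.mpr fun j _ => pow_ne_zero _ (hu0 _)
  have hsr : ∀ i, s i * s (r i) = 1 := by
    intro i
    have hc : ∀ j : ℕ, (π ^ j) (r i) = r ((π ^ j) i) := by
      intro j
      induction j with
      | zero => simp
      | succ j ih => rw [pow_succ', Equiv.Perm.mul_apply, ih, hπr, Equiv.Perm.mul_apply]
    simp only [s, ← Finset.prod_mul_distrib, hc, ← mul_pow, hur, one_pow, Finset.prod_const_one]
  have hsπ : ∀ i, s i = S i * s (π i) ^ p := by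
    intro i
    have h1 : s (π i) ^ p * u i = ∏ j ∈ Finset.range (N+1), u ((π ^ j) i) ^ (p ^ j) := by
      rw [Finset.prod_range_succ', ← Finset.prod_pow]
      simp only [pow_zero, pow_one, Equiv.Perm.one_apply]
      congr 1
      refine Finset.prod_congr rfl fun j _ => ?_
      rw [← pow_mul, ← pow_succ, pow_succ π, Equiv.Perm.mul_apply]
    have h2 : π ^ N = 1 := pow_card_eq_one'
    rw [Finset.prod_range_succ, h2, Equiv.Perm.one_apply] at h1
    have h3 : u i ^ (p ^ N) = u i ^ (p ^ N - 1) * u i := by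
      rw [← pow_succ]; congr 1; omega
    rw [h3, ← mul_assoc] at h1
    have h4 := mul_right_cancel₀ (hu0 i) h1
    rw [h4]
    calc s i = s i * (u i ^ (p ^ N - 1) * S i) := by rw [huS, mul_one]
      _ = _ := by simp only [s]; ring
  refine ⟨fun i => t0 i * s i, fun i => mul_ne_zero (ht0 i) (hs0 i), fun i => ?_, fun i => ?_⟩
  · have h2 := ht0 i
    show t0 i * s i = R i * (t0 (π i) * s (π i)) ^ p
    rw [hsπ i]
    simp only [S]
    field_simp
    rw [mul_pow, mul_assoc]
  · calc _ = (t0 i * t0 (r i)) * (s i * s (r i)) := by ring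
      _ = _ := by rw [hsr, ht0r, mul_one]

theorem lemmaH (π : Equiv.Perm ι) (r : ι → ι) (hr : ∀ i, r (r i) = i) (hπr : ∀ i, π (r i) = r (π i))
    (h : ι → Prop) (hh : ∀ i, h (r i) ↔ ¬ h i) (xx xy yy : ι → k)
    (hxx : ∀ i, xx i = xx (π i) ^ p) (hxy : ∀ i, xy i = xy (π i) ^ p) (hyy : ∀ i, yy i = yy (π i) ^ p)
    (hxxr : ∀ i, xx (r i) = - xx i) (hyyr : ∀ i, yy (r i) = - yy i) :
    ∃ A D : ι → k, (∀ i, A i = A (π i) ^ p) ∧ (∀ i, D i = D (π i) ^ p) ∧ (∀ i, A i ≠ 0 ∨ D i ≠ 0) ∧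
      ∀ i, A i * A (r i) * xx i + A i * D (r i) * xy i - D i * A (r i) * xy (r i) +
        D i * D (r i) * yy i = 0 := by
  classical
  have hp0 : p ≠ 0 := (Fact.out : p.Prime).ne_zero
  let γ : ι → k := fun i => xy (r i) / xx (r i)
  have hγ : ∀ i, γ i = γ (π i) ^ p := by
    intro i; simp only [γ]; rw [div_pow, ← hπr, ← hxy, ← hxx]
  let Y : ι → k := fun i => yy i + xy i * xy (r i) / xx i
  have hY : ∀ i, Y i = Y (π i) ^ p := by
    intro i; simp only [Y]
    have := map_add (frobenius k p) (yy (π i)) (xy (π i) * xy (r (π i)) / xx (π i))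
    simp only [frobenius_def] at this
    rw [this, div_pow, mul_pow, ← hπr, ← hxy, ← hxx, ← hyy, ← hxy]
  have hYr : ∀ i, Y (r i) = - Y i := by
    intro i; simp only [Y, hr, hyyr, hxxr, div_neg]; ring
  let μ : ι → k := fun i => if xx i ≠ 0 ∧ Y i ≠ 0 then - Y i / xx i else 1
  have e1 : ∀ i, xx (π i) = 0 ↔ xx i = 0 := fun i => by rw [hxx i]; simp [hp0]
  have e2 : ∀ i, Y (π i) = 0 ↔ Y i = 0 := fun i => by rw [hY i]; simp [hp0]
  obtain ⟨t, ht0, htπ, htr⟩ := torus (p := p) π r hr hπr h hh (fun _ => 1) μ (by simp)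
    (by intro i; simp only [μ]; split_ifs with hc <;> simp [hc])
    (by intro i; simp only [μ, hxxr, hYr, neg_ne_zero, neg_div_neg_eq])
    (by
      intro i
      have h1 := map_neg (frobenius k p) (Y (π i) / xx (π i))
      simp only [frobenius_def] at h1
      simp only [μ, ne_eq, e1, e2, one_mul]
      split_ifs
      · rw [neg_div, h1, div_pow, ← hY, ← hxx, neg_div]
      · simp)
  simp only [one_mul] at htπ
  let α : ι → k := fun i => if Y i = 0 then 0 else t i
  have hα : ∀ i, α i = α (π i) ^ p := by
    intro i; simp only [α, e2]; split_ifs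
    · simp [hp0]
    · exact htπ i
  refine ⟨fun i => if xx i = 0 then 1 else α i - γ i, fun i => if xx i = 0 then 0 else 1, ?_, ?_, ?_, ?_⟩
  · intro i
    simp only [e1]
    have h1 := map_sub (frobenius k p) (α (π i)) (γ (π i))
    simp only [frobenius_def] at h1
    split_ifs
    · simp
    · rw [h1, ← hα, ← hγ]
  · intro i; simp only [e1]; split_ifs <;> simp [hp0]
  · intro i; by_cases hx : xx i = 0 <;> simp [hx]
  · intro i
    simp only [hxxr, neg_eq_zero]
    by_cases hx : xx i = 0
    · simp [hx]
    · simp only [hx, if_false]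
      have h1 : γ (r i) * xx i = xy i := by simp only [γ, hr]; field_simp
      have h2 : γ i * xx i = - xy (r i) := by simp only [γ, hxxr]; field_simp
      have h3 : Y i * xx i = yy i * xx i + xy i * xy (r i) := by simp only [Y]; field_simp
      have h4 : α i * α (r i) * xx i = - Y i := by
        simp only [α, hYr, neg_eq_zero]
        by_cases hy : Y i = 0
        · simp [hy]
        · simp only [hy, if_false]
          rw [htr]; simp [μ, hx, hy]
      clear_value γ Y α
      apply mul_right_cancel₀ hx
      rw [zero_mul]
      linear_combination (xx i)*h4 - h3 + (-(α i)*xx i + γ i * xx i + xy (r i))*h1 - (α (r i))*xx i*h2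
end torus

open Module Polynomial
set_option linter.unusedSectionVars false

/-- combinatorial type -/
structure VT (l : ℕ) (v : ℕ → ℕ) : Prop where
  zero : v 0 = 0
  step : ∀ i, i < 2 * l → v (i+1) = v i ∨ v (i+1) = v i + 1
  sym : ∀ i, i ≤ 2 * l → v (2 * l - i) + i = l + v i

namespace VT
variable {l : ℕ} {v : ℕ → ℕ} (hv : VT l v)
include hv

theorem mono {i j : ℕ} (hij : i ≤ j) (hj : j ≤ 2 * l) : v i ≤ v j ∧ v j + i ≤ v i + j := by
  induction j, hij using Nat.le_induction with
  | base => exact ⟨le_rfl, le_rfl⟩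
  | succ j hij ih =>
    have := ih (by omega)
    rcases hv.step j (by omega) with h | h <;> omega

theorem top : v (2 * l) = l := by
  have := hv.sym 0 (by omega)
  have := hv.zero
  simp at *; omega

theorem le_l {i : ℕ} (hi : i ≤ 2 * l) : v i ≤ l := by
  have := hv.mono hi le_rfl
  rw [hv.top] at this; omega

theorem le_self {i : ℕ} (hi : i ≤ 2 * l) : v i ≤ i := by
  have := hv.mono (Nat.zero_le i) hi
  rw [hv.zero] at this; omega

theorem sub_le {i : ℕ} (hi : i ≤ 2 * l) : i ≤ l + v i := by
  have := hv.mono hi le_rfl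
  rw [hv.top] at this; omega

end VT

/-- step indicator -/
def eps (v : ℕ → ℕ) (i : ℕ) : Prop := v (i+1) = v i + 1

instance (v : ℕ → ℕ) : DecidablePred (eps v) := fun i => inferInstanceAs (Decidable (v (i+1) = v i + 1))

/-- permutation on naturals -/
def pin (l : ℕ) (v : ℕ → ℕ) (i : ℕ) : ℕ := if eps v i then v i else l + i - v i

namespace VT
variable {l : ℕ} {v : ℕ → ℕ} (hv : VT l v)
include hv

theorem pin_lt {i : ℕ} (hi : i < 2 * l) : pin l v i < 2 * l := by
  have h1 := hv.le_l (i := i+1) (by omega)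
  have h2 := hv.sub_le (i := i+1) (by omega)
  have h3 := hv.step i hi
  by_cases he : v (i+1) = v i + 1
  · simp only [pin, eps, he, if_true]; omega
  · simp only [pin, eps, he, if_false]; omega

theorem pin_lt_l {i : ℕ} (hi : i < 2 * l) : pin l v i < l ↔ eps v i := by
  have h1 := hv.le_l (i := i+1) (by omega)
  have h2 := hv.sub_le (i := i+1) (by omega)
  have h4 := hv.le_self (i := i) (by omega)
  have h3 := hv.step i hi
  by_cases he : v (i+1) = v i + 1
  · simp only [pin, eps, he, if_true, iff_true]; omega
  · simp only [pin, eps, he, if_false, iff_false]; omega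

theorem pin_inj {i j : ℕ} (hi : i < 2 * l) (hj : j < 2 * l) (h : pin l v i = pin l v j) : i = j := by
  wlog hij : i < j generalizing i j
  · by_contra hne
    exact hne (this hj hi h.symm (by omega)).symm
  exfalso
  have h1 := hv.mono (i := i+1) (j := j) (by omega) (by omega)
  have h2 := hv.pin_lt_l hi
  have h3 := hv.pin_lt_l hj
  have h4 := hv.step i hi
  have h5 := hv.le_self (i := i) (by omega)
  have h6 := hv.le_self (i := j) (by omega)
  rw [h, h3] at h2
  unfold pin at h
  by_cases he : eps v i
  · rw [if_pos he, if_pos (h2.mpr he)] at h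
    unfold eps at he; omega
  · rw [if_neg he, if_neg (fun hh => he (h2.mp hh))] at h
    unfold eps at he; omega

/-- the permutation -/
noncomputable def perm : Equiv.Perm (Fin (2 * l)) :=
  Equiv.ofBijective (fun i => ⟨pin l v i, hv.pin_lt i.2⟩)
    (Finite.injective_iff_bijective.mp fun i j h => Fin.ext (hv.pin_inj i.2 j.2 (by simpa using h)))

theorem perm_val (i : Fin (2 * l)) : (hv.perm i : ℕ) = pin l v i := rfl

theorem perm_eps {i : Fin (2 * l)} (h : eps v i) : (hv.perm i : ℕ) = v i := by
  rw [perm_val, pin, if_pos h]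

theorem perm_neps {i : Fin (2 * l)} (h : ¬ eps v i) : (hv.perm i : ℕ) = l + i - v i := by
  rw [perm_val, pin, if_neg h]

theorem perm_lt_iff (i : Fin (2 * l)) : (hv.perm i : ℕ) < l ↔ eps v i := hv.pin_lt_l i.2

theorem step_neps {i : Fin (2 * l)} (h : ¬ eps v i) : v (i+1) = v i := by
  have := hv.step i i.2
  unfold eps at h; omega

theorem eps_rev (i : Fin (2 * l)) : eps v (Fin.rev i) ↔ ¬ eps v i := by
  have h1 := hv.sym i (by omega)
  have h2 := hv.sym (i+1) (by omega)
  have h3 := hv.step i i.2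
  have e1 : (Fin.rev i : ℕ) = 2 * l - (i + 1) := Fin.val_rev i
  have e2 : (Fin.rev i : ℕ) + 1 = 2 * l - i := by omega
  unfold eps
  rw [e2, e1]; omega

theorem perm_rev (i : Fin (2 * l)) : hv.perm (Fin.rev i) = Fin.rev (hv.perm i) := by
  apply Fin.ext
  have h1 := hv.sym i (by omega)
  have h2 := hv.sym (i+1) (by omega)
  have h3 := hv.step i i.2
  have e1 : (Fin.rev i : ℕ) = 2 * l - (i + 1) := Fin.val_rev i
  have h5 := hv.le_self (i := i) (by omega)
  have h6 := hv.le_l (i := i+1) (by omega)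
  rw [Fin.val_rev (hv.perm i)]
  by_cases he : eps v i
  · rw [hv.perm_eps he, hv.perm_neps (by rw [hv.eps_rev]; exact fun hh => hh he), e1]
    unfold eps at he; omega
  · rw [hv.perm_neps he, hv.perm_eps (by rw [hv.eps_rev]; exact he), e1]
    unfold eps at he; omega

end VT

namespace PolarizedBT1Space
variable {p : ℕ} [Fact p.Prime] {k : Type} [Field k] [CharP k p] [PerfectRing k p] {g : ℕ}
variable (X : PolarizedBT1Space p k g)

theorem skew (x y : X.M) : X.B x y = - X.B y x := by
  have h := X.halt (x + y)
  simp only [map_add, LinearMap.add_apply, X.halt] at h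
  linear_combination h

theorem neg_pow_p (a : k) : (-a) ^ p = - a ^ p := by
  have := map_neg (frobenius k p) a
  simpa [frobenius_def] using this

theorem pow_p_inj {a b : k} (h : a ^ p = b ^ p) : a = b :=
  frobenius_inj k p (by simpa [frobenius_def] using h)

theorem pow_p_zero {a : k} : a ^ p = 0 ↔ a = 0 :=
  pow_eq_zero_iff (Fact.out : p.Prime).ne_zero

theorem compat2 (x y : X.M) : X.B (X.V x) y ^ p = X.B x (X.F y) := by
  rw [X.skew x, X.hcompat, X.skew y, neg_pow_p, neg_neg]

theorem V_F (x : X.M) : X.V (X.F x) = 0 := by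
  have : X.F x ∈ LinearMap.ker X.V := by rw [X.hVF]; exact ⟨x, rfl⟩
  exact this

theorem F_V (x : X.M) : X.F (X.V x) = 0 := by
  have : X.V x ∈ LinearMap.ker X.F := by rw [X.hFV]; exact ⟨x, rfl⟩
  exact this

theorem exists_V {x : X.M} (h : X.F x = 0) : ∃ y, X.V y = x := by
  have : x ∈ LinearMap.range X.V := by rw [← X.hFV]; exact h
  exact this

theorem exists_F {x : X.M} (h : X.V x = 0) : ∃ y, X.F y = x := by
  have : x ∈ LinearMap.range X.F := by rw [← X.hVF]; exact h
  exact this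

/-- orthogonal -/
def orth (A : Submodule k X.M) : Submodule k X.M := LinearMap.BilinForm.orthogonal X.B A

theorem mem_orth {A : Submodule k X.M} {y : X.M} : y ∈ X.orth A ↔ ∀ x ∈ A, X.B x y = 0 := Iff.rfl

theorem isRefl : LinearMap.BilinForm.IsRefl X.B := fun x y h => by rw [X.skew, h, neg_zero]

theorem nondeg : LinearMap.BilinForm.Nondegenerate X.B := by
  refine ⟨fun x h => X.hnondeg x h, fun x h => X.hnondeg x fun y => ?_⟩
  rw [X.skew, h, neg_zero]

theorem orth_orth (A : Submodule k X.M) : X.orth (X.orth A) = A :=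
  LinearMap.BilinForm.orthogonal_orthogonal X.nondeg X.isRefl A

theorem orth_anti {A C : Submodule k X.M} (h : A ≤ C) : X.orth C ≤ X.orth A :=
  fun _ hy x hx => hy x (h hx)

theorem orth_inj {A C : Submodule k X.M} (h : X.orth A = X.orth C) : A = C := by
  rw [← X.orth_orth A, h, X.orth_orth]

theorem orth_le {A C : Submodule k X.M} : X.orth A ≤ X.orth C ↔ C ≤ A :=
  ⟨fun h => by rw [← X.orth_orth A, ← X.orth_orth C]; exact X.orth_anti h, X.orth_anti⟩

theorem orth_bot : X.orth ⊥ = ⊤ := by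
  rw [eq_top_iff]; intro y _ x hx
  rw [Submodule.mem_bot] at hx; subst hx; exact by simp

theorem orth_top : X.orth ⊤ = ⊥ := by rw [← X.orth_bot, X.orth_orth]

theorem le_orth_comm {A C : Submodule k X.M} : A ≤ X.orth C ↔ C ≤ X.orth A := by
  constructor <;> intro h <;> rw [← X.orth_le, X.orth_orth] <;> exact h

theorem orth_V (A : Submodule k X.M) : X.orth (A.map X.V) = (X.orth A).comap X.F := by
  ext y
  simp only [Submodule.mem_comap, mem_orth, Submodule.mem_map]
  constructor
  · intro h x hx
    rw [← X.compat2, h _ ⟨x, hx, rfl⟩, pow_p_zero]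
  · rintro h _ ⟨x, hx, rfl⟩
    rw [← pow_p_zero (p := p), X.compat2, h x hx]

theorem orth_F (A : Submodule k X.M) : X.orth (A.comap X.F) = (X.orth A).map X.V := by
  rw [← X.orth_orth (A := (X.orth A).map X.V), X.orth_V, X.orth_orth]

theorem eq_of_maps {A C : Submodule k X.M} (h : A ≤ C) (hV : A.map X.V = C.map X.V)
    (hF : A.comap X.F = C.comap X.F) : A = C := by
  refine le_antisymm h fun c hc => ?_
  have h1 : X.V c ∈ A.map X.V := by rw [hV]; exact ⟨c, hc, rfl⟩
  obtain ⟨a, ha, hac⟩ := h1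
  obtain ⟨d, hd⟩ := X.exists_F (x := c - a) (by rw [map_sub, hac, sub_self])
  have h2 : d ∈ A.comap X.F := by
    rw [hF, Submodule.mem_comap, hd]; exact C.sub_mem hc (h ha)
  rw [Submodule.mem_comap, hd] at h2
  simpa using A.add_mem h2 ha

theorem comap_bot_eq : (⊥ : Submodule k X.M).comap X.F = (⊤ : Submodule k X.M).map X.V := by
  rw [Submodule.map_top]; exact X.hFV

/-- generalized flag -/
structure GFlag (l : ℕ) where
  W : ℕ → Submodule k X.M
  v : ℕ → ℕ
  lt : ∀ i j, i < j → j ≤ 2 * l → W i < W j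
  W0 : W 0 = ⊥
  Wt : W (2 * l) = ⊤
  hv : VT l v
  hV : ∀ i, i ≤ 2 * l → (W i).map X.V = W (v i)
  hF : ∀ i, i ≤ 2 * l → (W i).comap X.F = W (l + i - v i)
  ho : ∀ i, i ≤ 2 * l → X.orth (W i) = W (2 * l - i)

theorem chain_enum (C : Set (Submodule k X.M)) (hC : IsChain (· ≤ ·) C) (hbot : ⊥ ∈ C) :
    ∃ N : ℕ, ∃ W : ℕ → Submodule k X.M, (∀ i j, i < j → j ≤ N → W i < W j) ∧
      ∀ A, A ∈ C ↔ ∃ i, i ≤ N ∧ A = W i := by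
  classical
  have hinj : Set.InjOn (fun A : Submodule k X.M => finrank k A) C := by
    intro A hA D hD h
    rcases hC.total hA hD with h1 | h1
    · exact Submodule.eq_of_le_of_finrank_eq h1 h
    · exact (Submodule.eq_of_le_of_finrank_eq h1 h.symm).symm
  have hfin : C.Finite := by
    refine Set.Finite.of_finite_image ((Set.finite_Iic (2 * g)).subset ?_) hinj
    rintro _ ⟨A, _, rfl⟩
    have := Submodule.finrank_le A
    rw [X.hdim] at this; exact this
  have := hfin.fintype
  let _ : LinearOrder C :=
    { (inferInstance : PartialOrder C) with
      le_total := fun a b => hC.total a.2 b.2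
      toDecidableLE := Classical.decRel _ }
  have hpos : 0 < Fintype.card C := Fintype.card_pos_iff.mpr ⟨⟨⊥, hbot⟩⟩
  obtain ⟨N, hN⟩ : ∃ N, Fintype.card C = N + 1 := ⟨Fintype.card C - 1, by omega⟩
  let e := Fintype.orderIsoFinOfCardEq C hN
  refine ⟨N, fun i => if h : i ≤ N then (e ⟨i, by omega⟩ : Submodule k X.M) else ⊤, ?_, ?_⟩
  · intro i j hij hj
    beta_reduce
    rw [dif_pos hj, dif_pos (by omega)]
    exact e.lt_iff_lt.mpr hij
  · intro A
    constructor
    · intro hA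
      refine ⟨e.symm ⟨A, hA⟩, by omega, ?_⟩
      beta_reduce
      rw [dif_pos (by omega)]
      simp
    · rintro ⟨i, hi, rfl⟩
      beta_reduce
      rw [dif_pos hi]
      exact (e _).2

theorem chain_flag (C : Set (Submodule k X.M)) (hC : IsChain (· ≤ ·) C) (hbot : ⊥ ∈ C)
    (htop : ⊤ ∈ C) (hV : ∀ A ∈ C, A.map X.V ∈ C) (hF : ∀ A ∈ C, A.comap X.F ∈ C)
    (ho : ∀ A ∈ C, X.orth A ∈ C) :
    ∃ l : ℕ, ∃ Γ : X.GFlag l, ∀ A, A ∈ C ↔ ∃ i, i ≤ 2 * l ∧ A = Γ.W i := by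
  obtain ⟨N, W, hlt, hmem⟩ := X.chain_enum C hC hbot
  have hle : ∀ i j, i ≤ N → j ≤ N → (W i ≤ W j ↔ i ≤ j) := by
    intro i j hi hj
    constructor
    · intro h
      by_contra hc
      exact absurd h (not_le_of_gt (hlt j i (by omega) hi))
    · intro h
      rcases Nat.lt_or_eq_of_le h with h | h
      · exact (hlt i j h hj).le
      · rw [h]
  have heq : ∀ i j, i ≤ N → j ≤ N → W i = W j → i = j := fun i j hi hj h =>
    le_antisymm ((hle i j hi hj).mp h.le) ((hle j i hj hi).mp h.ge)
  have hW : ∀ i, i ≤ N → W i ∈ C := fun i hi => (hmem _).mpr ⟨i, hi, rfl⟩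
  have e1 : ∀ i, ∃ j, i ≤ N → j ≤ N ∧ (W i).map X.V = W j := fun i => by
    by_cases hi : i ≤ N
    · obtain ⟨j, h1, h2⟩ := (hmem _).mp (hV _ (hW i hi)); exact ⟨j, fun _ => ⟨h1, h2⟩⟩
    · exact ⟨0, fun h => absurd h hi⟩
  have e2 : ∀ i, ∃ j, i ≤ N → j ≤ N ∧ (W i).comap X.F = W j := fun i => by
    by_cases hi : i ≤ N
    · obtain ⟨j, h1, h2⟩ := (hmem _).mp (hF _ (hW i hi)); exact ⟨j, fun _ => ⟨h1, h2⟩⟩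
    · exact ⟨0, fun h => absurd h hi⟩
  have e3 : ∀ i, ∃ j, i ≤ N → j ≤ N ∧ X.orth (W i) = W j := fun i => by
    by_cases hi : i ≤ N
    · obtain ⟨j, h1, h2⟩ := (hmem _).mp (ho _ (hW i hi)); exact ⟨j, fun _ => ⟨h1, h2⟩⟩
    · exact ⟨0, fun h => absurd h hi⟩
  choose v hv using e1
  choose f hf using e2
  choose o ho' using e3
  have W0 : W 0 = ⊥ := by
    obtain ⟨i, hi, h⟩ := (hmem _).mp hbot
    have : W 0 ≤ W i := (hle 0 i (by omega) hi).mpr (by omega)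
    rw [← h] at this; exact le_bot_iff.mp this
  have Wt : W N = ⊤ := by
    obtain ⟨i, hi, h⟩ := (hmem _).mp htop
    have : W i ≤ W N := (hle i N hi le_rfl).mpr hi
    rw [← h] at this; exact top_le_iff.mp this
  have hv0 : v 0 = 0 := by
    apply heq _ _ (hv 0 (by omega)).1 (by omega)
    rw [← (hv 0 (by omega)).2, W0, Submodule.map_bot]
  have hfN : f N = N := by
    apply heq _ _ (hf N le_rfl).1 le_rfl
    rw [← (hf N le_rfl).2, Wt, Submodule.comap_top]
  have hvf : f 0 = v N := by
    apply heq _ _ (hf 0 (by omega)).1 (hv N le_rfl).1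
    rw [← (hf 0 (by omega)).2, ← (hv N le_rfl).2, W0, Wt, X.comap_bot_eq]
  have vmono : ∀ i j, i ≤ j → j ≤ N → v i ≤ v j := by
    intro i j hij hj
    rw [← hle _ _ (hv i (by omega)).1 (hv j hj).1, ← (hv i (by omega)).2, ← (hv j hj).2]
    exact Submodule.map_mono ((hle _ _ (by omega) hj).mpr hij)
  have fmono : ∀ i j, i ≤ j → j ≤ N → f i ≤ f j := by
    intro i j hij hj
    rw [← hle _ _ (hf i (by omega)).1 (hf j hj).1, ← (hf i (by omega)).2, ← (hf j hj).2]
    exact Submodule.comap_mono ((hle _ _ (by omega) hj).mpr hij)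
  have hsm : ∀ i, i < N → v i + f i < v (i+1) + f (i+1) := by
    intro i hi
    have h1 := vmono i (i+1) (by omega) (by omega)
    have h2 := fmono i (i+1) (by omega) (by omega)
    by_contra hc
    have h3 : v i = v (i+1) := by omega
    have h4 : f i = f (i+1) := by omega
    have := X.eq_of_maps (hlt i (i+1) (by omega) (by omega)).le
      (by rw [(hv i (by omega)).2, (hv (i+1) (by omega)).2, h3])
      (by rw [(hf i (by omega)).2, (hf (i+1) (by omega)).2, h4])
    exact absurd this (hlt i (i+1) (by omega) (by omega)).ne
  have hlow : ∀ i, i ≤ N → v N + i ≤ v i + f i := by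
    intro i
    induction i with
    | zero => intro _; omega
    | succ i ih => intro hi; have := ih (by omega); have := hsm i (by omega); omega
  have hup : ∀ d, d ≤ N → v (N - d) + f (N - d) + d ≤ v N + N := by
    intro d
    induction d with
    | zero => intro _; simp [hfN]
    | succ d ih =>
      intro hd
      have := ih (by omega)
      have := hsm (N - (d+1)) (by omega)
      rw [show N - (d+1) + 1 = N - d by omega] at this
      omega
  have hsum : ∀ i, i ≤ N → v i + f i = v N + i := by
    intro i hi
    have := hlow i hi
    have := hup (N - i) (by omega)
    rw [show N - (N - i) = i by omega] at this
    omega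
  have oanti : ∀ i, i < N → o (i+1) < o i := by
    intro i hi
    have h1 : o (i+1) ≤ o i := by
      rw [← hle _ _ (ho' _ (by omega)).1 (ho' _ (by omega)).1, ← (ho' _ (by omega)).2, ← (ho' i (by omega)).2]
      exact X.orth_anti (hlt i (i+1) (by omega) (by omega)).le
    refine lt_of_le_of_ne h1 fun h => ?_
    have : W i = W (i+1) := X.orth_inj (by
      rw [(ho' i (by omega)).2, (ho' (i+1) (by omega)).2, h])
    exact absurd this (hlt i (i+1) (by omega) (by omega)).ne
  have o1 : ∀ i, i ≤ N → o i + i ≤ N := by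
    intro i
    induction i with
    | zero => intro _; simpa using (ho' 0 (by omega)).1
    | succ i ih => intro hi; have := ih (by omega); have := oanti i (by omega); omega
  have o2 : ∀ d, d ≤ N → d ≤ o (N - d) := by
    intro d
    induction d with
    | zero => intro _; omega
    | succ d ih =>
      intro hd
      have := ih (by omega)
      have := oanti (N - (d+1)) (by omega)
      rw [show N - (d+1) + 1 = N - d by omega] at this
      omega
  have hoo : ∀ i, i ≤ N → o i = N - i := by
    intro i hi
    have := o1 i hi
    have := o2 (N - i) (by omega)
    rw [show N - (N - i) = i by omega] at this
    omega
  have hvN : v N ≤ N := (hv N le_rfl).1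
  have hN : N = 2 * v N := by
    have h1 : X.orth (W (v N)) = W (v N) := by
      rw [← (hv N le_rfl).2, X.orth_V, Wt, X.orth_top, X.comap_bot_eq]
    rw [(ho' _ hvN).2, hoo _ hvN] at h1
    have := heq _ _ (by omega) hvN h1
    omega
  have hsym : ∀ i, i ≤ N → v (N - i) + i = v N + v i := by
    intro i hi
    have h1 := X.orth_V (W i)
    rw [(hv i hi).2, (ho' _ (hv i hi).1).2, (ho' i hi).2, hoo _ hi, hoo _ (hv i hi).1,
      (hf _ (by omega)).2] at h1
    have h2 := heq _ _ (by omega) (hf (N - i) (by omega)).1 h1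
    have h3 := hsum (N - i) (by omega)
    have := (hv i hi).1
    omega
  refine ⟨v N, ⟨W, v, ?_, W0, ?_, ⟨hv0, ?_, ?_⟩, ?_, ?_, ?_⟩, ?_⟩
  · rw [← hN]; exact hlt
  · rw [← hN]; exact Wt
  · rw [← hN]; intro i hi
    have h1 := hsum i (by omega)
    have h2 := hsum (i+1) (by omega)
    have h3 := vmono i (i+1) (by omega) (by omega)
    have h4 := fmono i (i+1) (by omega) (by omega)
    omega
  · rw [← hN]; exact hsym
  · rw [← hN]; exact fun i hi => (hv i hi).2
  · rw [← hN]; intro i hi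
    rw [(hf i hi).2]
    have := hsum i hi
    congr 1; omega
  · rw [← hN]; intro i hi
    rw [(ho' i hi).2, hoo i hi]
  · intro A; simp only [← hN]; exact hmem A

namespace GFlag
variable {X} {l : ℕ} (Γ : X.GFlag l)

theorem le_iff {i j : ℕ} (hi : i ≤ 2 * l) (hj : j ≤ 2 * l) : Γ.W i ≤ Γ.W j ↔ i ≤ j := by
  constructor
  · intro h
    by_contra hc
    exact absurd h (not_le_of_gt (Γ.lt j i (by omega) hi))
  · intro h
    rcases Nat.lt_or_eq_of_le h with h | h
    · exact (Γ.lt i j h hj).le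
    · rw [h]

theorem inj {i j : ℕ} (hi : i ≤ 2 * l) (hj : j ≤ 2 * l) (h : Γ.W i = Γ.W j) : i = j :=
  le_antisymm ((Γ.le_iff hi hj).mp h.le) ((Γ.le_iff hj hi).mp h.ge)

theorem finrank_le_add {i j : ℕ} (hij : i ≤ j) (hj : j ≤ 2 * l) :
    finrank k (Γ.W i) + (j - i) ≤ finrank k (Γ.W j) := by
  induction j, hij using Nat.le_induction with
  | base => simp
  | succ j hij ih =>
    have h1 := ih (by omega)
    have h2 := Submodule.finrank_lt_finrank_of_lt (Γ.lt j (j+1) (by omega) hj)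
    omega

theorem l_le (Γ : X.GFlag l) : l ≤ g := by
  have := Γ.finrank_le_add (Nat.zero_le (2 * l)) le_rfl
  rw [Γ.Wt, finrank_top, X.hdim] at this
  omega

end GFlag

theorem GFlag.finrank_eq {X : PolarizedBT1Space p k g} (Γ : X.GFlag g) {i : ℕ} (hi : i ≤ 2 * g) :
    finrank k (Γ.W i) = i := by
  have h1 := Γ.finrank_le_add (Nat.zero_le i) hi
  have h2 := Γ.finrank_le_add hi le_rfl
  rw [Γ.Wt, finrank_top, X.hdim] at h2
  omega

end PolarizedBT1Space

open Module Polynomial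
set_option linter.unusedSectionVars false

namespace PolarizedBT1Space
variable {p : ℕ} [Fact p.Prime] {k : Type} [Field k] [CharP k p] [PerfectRing k p] {g : ℕ}

/-- shift-type semilinear map -/
def shiftMap {ι M : Type} [AddCommGroup M] [Module k M] (π : ι → ι) (G : ι → M →ₛₗ[frobenius k p] M) :
    (ι → M) →ₛₗ[frobenius k p] (ι → M) where
  toFun x i := G i (x (π i))
  map_add' x y := by funext i; simp
  map_smul' c x := by funext i; simp [map_smulₛₗ]

theorem shiftMap_apply {ι M : Type} [AddCommGroup M] [Module k M] (π : ι → ι)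
    (G : ι → M →ₛₗ[frobenius k p] M) (x : ι → M) (i : ι) :
    shiftMap π G x i = G i (x (π i)) := rfl

variable (X : PolarizedBT1Space p k g)

theorem exists_sec (W : Submodule k X.M) : ∃ S : X.M →ₛₗ[frobenius k p] X.M,
    ∀ y ∈ W.map X.V, S y ∈ W ∧ X.V (S y) = y := by
  classical
  let U := W.map X.V
  let b := Module.finBasis k U
  have hb : ∀ i, ∃ w ∈ W, X.V w = (b i : X.M) := fun i => (b i).2
  choose w hw hwb using hb
  obtain ⟨pr, hpr⟩ := LinearMap.exists_leftInverse_of_injective U.subtype (by simp)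
  refine ⟨{ toFun := fun y => ∑ i, (b.repr (pr y) i) ^ p • w i, map_add' := ?_, map_smul' := ?_ }, ?_⟩
  · intro x y
    rw [← Finset.sum_add_distrib]
    refine Finset.sum_congr rfl fun i _ => ?_
    have := map_add (frobenius k p) (b.repr (pr x) i) (b.repr (pr y) i)
    simp only [frobenius_def] at this
    rw [map_add, map_add, Finsupp.add_apply, this, add_smul]
  · intro c y
    rw [Finset.smul_sum]
    refine Finset.sum_congr rfl fun i _ => ?_
    rw [map_smul, map_smul, Finsupp.smul_apply, smul_eq_mul, mul_pow, mul_smul, frobenius_def]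
  · intro y hy
    refine ⟨show ∑ i, (b.repr (pr y) i) ^ p • w i ∈ W from W.sum_mem fun i _ => W.smul_mem _ (hw i), ?_⟩
    have h1 : pr y = ⟨y, hy⟩ := by
      have := LinearMap.congr_fun hpr ⟨y, hy⟩
      simpa using this
    show X.V (∑ i, (b.repr (pr y) i) ^ p • w i) = y
    rw [map_sum]
    have h2 : ∀ a : k, (frobeniusEquiv k p).symm (a ^ p) = a := fun a => by
      rw [← frobenius_def]; simp
    simp only [map_smulₛₗ, hwb, RingHom.coe_coe, h2, h1]
    have := b.sum_repr ⟨y, hy⟩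
    have h3 := congrArg U.subtype this
    rw [map_sum] at h3
    simpa using h3

theorem tau_pow (a : k) : ((frobeniusEquiv k p).symm : k →+* k) (a ^ p) = a := by
  rw [← frobenius_def]; simp

theorem tau_pow' (a : k) : (((frobeniusEquiv k p).symm : k →+* k) a) ^ p = a := by
  rw [← frobenius_def]; simp

namespace GFlag
variable {X} {l : ℕ} (Γ : X.GFlag l)

theorem V0 {b : Fin (2 * l)} (h : eps Γ.v b) : (Γ.W b).map X.V = Γ.W (Γ.hv.perm b) := by
  rw [Γ.hV _ (by omega), Γ.hv.perm_eps h]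

theorem V1 {b : Fin (2 * l)} (h : eps Γ.v b) : (Γ.W (b+1)).map X.V = Γ.W (Γ.hv.perm b + 1) := by
  rw [Γ.hV _ (by omega), Γ.hv.perm_eps h, show Γ.v (b+1) = _ from h]

theorem F0 {b : Fin (2 * l)} (h : ¬ eps Γ.v b) : (Γ.W b).comap X.F = Γ.W (Γ.hv.perm b) := by
  rw [Γ.hF _ (by omega), Γ.hv.perm_neps h]

theorem F1 {b : Fin (2 * l)} (h : ¬ eps Γ.v b) : (Γ.W (b+1)).comap X.F = Γ.W (Γ.hv.perm b + 1) := by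
  have h2 := Γ.hv.le_self (i := b) (by omega)
  rw [Γ.hF _ (by omega), Γ.hv.perm_neps h, Γ.hv.step_neps h]
  congr 1; omega

theorem Fsame {b : Fin (2 * l)} (h : eps Γ.v b) : (Γ.W (b+1)).comap X.F = (Γ.W b).comap X.F := by
  rw [Γ.hF _ (by omega), Γ.hF _ (by omega), show Γ.v (b+1) = _ from h]
  congr 1; omega

theorem Vsame {b : Fin (2 * l)} (h : ¬ eps Γ.v b) : (Γ.W (b+1)).map X.V = (Γ.W b).map X.V := by
  rw [Γ.hV _ (by omega), Γ.hV _ (by omega), Γ.hv.step_neps h]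

theorem mem_of_V {b : Fin (2 * l)} (h : eps Γ.v b) {x : X.M} (hx : x ∈ Γ.W (b+1))
    (hVx : X.V x ∈ Γ.W (Γ.hv.perm b)) : x ∈ Γ.W b := by
  rw [← Γ.V0 h] at hVx
  obtain ⟨w, hw, hwx⟩ := hVx
  obtain ⟨c, hc⟩ := X.exists_F (x := x - w) (by rw [map_sub, hwx, sub_self])
  have h1 : c ∈ (Γ.W (b+1)).comap X.F := by
    rw [Submodule.mem_comap, hc]
    exact Submodule.sub_mem _ hx ((Γ.lt b (b+1) (by omega) (by omega)).le hw)
  rw [Γ.Fsame h, Submodule.mem_comap, hc] at h1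
  simpa using (Γ.W b).add_mem h1 hw

theorem Wle (b : Fin (2 * l)) : Γ.W b ≤ Γ.W (b+1) := (Γ.lt b (b+1) (by omega) (by omega)).le

theorem orth_rev (b : Fin (2 * l)) : X.orth (Γ.W (Fin.rev b)) = Γ.W (b + 1) := by
  rw [Γ.ho _ (by omega)]; congr 1; rw [Fin.val_rev]; omega

variable [IsAlgClosed k]

/-- refinement vectors -/
theorem exists_refine (b0 : Fin (2 * l)) (hb0 : finrank k (Γ.W b0) + 2 ≤ finrank k (Γ.W (b0 + 1))) :
    ∃ z : Fin (2 * l) → X.M, (∀ b : Fin (2 * l), z b ∈ Γ.W (b+1)) ∧ (∀ b : Fin (2 * l), eps Γ.v b → X.V (z b) = z (Γ.hv.perm b)) ∧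
      (∀ b : Fin (2 * l), ¬ eps Γ.v b → X.F (z (Γ.hv.perm b)) = z b) ∧ (∀ b, X.B (z b) (z (Fin.rev b)) = 0) ∧
      z b0 ∉ Γ.W b0 := by
  classical
  set π := Γ.hv.perm with hπ
  choose Sec hSec using X.exists_sec
  let G : Fin (2 * l) → X.M →ₛₗ[frobenius k p] X.M := fun b =>
    if eps Γ.v b then Sec (Γ.W (b+1)) else X.F
  have G1 : ∀ b : Fin (2 * l), eps Γ.v b → G b = Sec (Γ.W (b+1)) := fun b h => if_pos h
  have G2 : ∀ b : Fin (2 * l), ¬ eps Γ.v b → G b = X.F := fun b h => if_neg h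
  let f := shiftMap π G
  let S : Submodule k (Fin (2 * l) → X.M) := Submodule.pi Set.univ fun b => Γ.W (b+1)
  let N : Submodule k (Fin (2 * l) → X.M) := Submodule.pi Set.univ fun b => Γ.W b
  have mS : ∀ x, x ∈ S ↔ ∀ b : Fin (2 * l), x b ∈ Γ.W (b+1) := by intro x; simp [S, Submodule.mem_pi]
  have mN : ∀ x, x ∈ N ↔ ∀ b : Fin (2 * l), x b ∈ Γ.W b := by intro x; simp [N, Submodule.mem_pi]
  have hS : ∀ x ∈ S, f x ∈ S := by
    intro x hx
    rw [mS] at hx ⊢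
    intro b
    by_cases h : eps Γ.v b
    · show G b (x (π b)) ∈ _
      rw [G1 b h]; exact (hSec _ _ (by rw [Γ.V1 h]; exact hx (π b))).1
    · show G b (x (π b)) ∈ _
      rw [G2 b h, ← Submodule.mem_comap, Γ.F1 h]; exact hx _
  have hNS : N ≤ S := by
    intro x hx
    rw [mN] at hx; rw [mS]
    exact fun b => Γ.Wle b (hx b)
  have hN : ∀ x ∈ N, f x ∈ N := by
    intro x hx
    rw [mN] at hx ⊢
    intro b
    by_cases h : eps Γ.v b
    · show G b (x (π b)) ∈ _
      have h1 := (hSec (Γ.W (b+1)) (x (π b)) (by rw [Γ.V1 h]; exact Γ.Wle _ (hx (π b))))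
      rw [G1 b h]; exact Γ.mem_of_V h h1.1 (by rw [h1.2]; exact hx _)
    · show G b (x (π b)) ∈ _
      rw [G2 b h, ← Submodule.mem_comap, Γ.F0 h]; exact hx _
  have hinj : ∀ y ∈ S, f y ∈ N → y ∈ N := by
    intro y hy hfy
    rw [mS] at hy
    rw [mN] at hfy ⊢
    intro c
    obtain ⟨b, rfl⟩ := π.surjective c
    have h1 : G b (y (π b)) ∈ Γ.W b := hfy b
    by_cases h : eps Γ.v b
    · have h2 := (hSec (Γ.W (b+1)) (y (π b)) (by rw [Γ.V1 h]; exact hy (π b)))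
      rw [G1 b h] at h1
      rw [← h2.2, hπ, ← Γ.V0 h]
      exact ⟨_, h1, rfl⟩
    · rw [G2 b h] at h1
      rw [hπ, ← Γ.F0 h]; exact h1
  have key := lemmaL2 f S N hS hNS hN hinj
  have key2 : ∀ H : Submodule k X.M, Γ.W b0 ≤ H → (∀ x ∈ S, f x = x → x b0 ∈ H) → Γ.W (b0+1) ≤ H := by
    intro H h1 h2 w hw
    have h3 : Pi.single b0 w ∈ S := by
      rw [mS]; intro b
      by_cases hb : b = b0
      · subst hb; simpa using hw
      · simp [hb]
    have h4 : N ⊔ Submodule.span k {x | x ∈ S ∧ f x = x} ≤ H.comap (LinearMap.proj b0) := by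
      refine sup_le (fun x hx => h1 ((mN x).mp hx b0)) (Submodule.span_le.mpr fun x hx => h2 x hx.1 hx.2)
    have := h4 (key h3)
    simpa using this
  obtain ⟨x, hxS, hfx, hx0⟩ : ∃ x ∈ S, f x = x ∧ x b0 ∉ Γ.W b0 := by
    by_contra! hc
    have := Submodule.finrank_mono (key2 (Γ.W b0) le_rfl hc)
    omega
  obtain ⟨y, hyS, hfy, hy0⟩ : ∃ y ∈ S, f y = y ∧ y b0 ∉ Γ.W b0 ⊔ Submodule.span k {x b0} := by
    by_contra! hc
    have h1 := Submodule.finrank_mono (key2 _ le_sup_left hc)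
    have h2 := Submodule.finrank_add_le_finrank_add_finrank (Γ.W b0) (Submodule.span k {x b0})
    have h3 := finrank_span_le_card (R := k) ({x b0} : Set X.M)
    simp at h3
    omega
  rw [mS] at hxS hyS
  have fix1 : ∀ x : Fin (2 * l) → X.M, (∀ b : Fin (2 * l), x b ∈ Γ.W (b+1)) → f x = x →
      (∀ b : Fin (2 * l), eps Γ.v b → X.V (x b) = x (π b)) ∧ (∀ b : Fin (2 * l), ¬ eps Γ.v b → X.F (x (π b)) = x b) := by
    intro x hx hfx
    constructor
    · intro b h
      have h2 := (hSec (Γ.W (b+1)) (x (π b)) (by rw [Γ.V1 h]; exact hx (π b))).2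
      have h3 : G b (x (π b)) = x b := congrFun hfx b
      rw [G1 b h] at h3
      rw [← h3, h2]
    · intro b h
      have h3 : G b (x (π b)) = x b := congrFun hfx b
      rwa [G2 b h] at h3
  obtain ⟨xV, xF⟩ := fix1 x hxS hfx
  obtain ⟨yV, yF⟩ := fix1 y hyS hfy
  have hβ : ∀ x y : Fin (2 * l) → X.M, (∀ b : Fin (2 * l), eps Γ.v b → X.V (x b) = x (π b)) →
      (∀ b : Fin (2 * l), ¬ eps Γ.v b → X.F (x (π b)) = x b) → (∀ b : Fin (2 * l), eps Γ.v b → X.V (y b) = y (π b)) →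
      (∀ b : Fin (2 * l), ¬ eps Γ.v b → X.F (y (π b)) = y b) → ∀ b, X.B (x b) (y (Fin.rev b)) =
        X.B (x (π b)) (y (Fin.rev (π b))) ^ p := by
    intro x y xV xF yV yF b
    by_cases h : eps Γ.v b
    · have h' : ¬ eps Γ.v (Fin.rev b) := by rw [Γ.hv.eps_rev]; exact fun hh => hh h
      rw [← yF _ h', ← X.compat2, xV b h, hπ, Γ.hv.perm_rev]
    · have h' : eps Γ.v (Fin.rev b) := by rw [Γ.hv.eps_rev]; exact h
      rw [← xF _ h, X.hcompat, yV _ h', hπ, Γ.hv.perm_rev]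
  obtain ⟨A, D, hA, hD, hne, h0⟩ := lemmaH (p := p) (k := k) π Fin.rev Fin.rev_rev Γ.hv.perm_rev (fun b => eps Γ.v b)
    Γ.hv.eps_rev (fun b => X.B (x b) (x (Fin.rev b))) (fun b => X.B (x b) (y (Fin.rev b)))
    (fun b => X.B (y b) (y (Fin.rev b))) (hβ x x xV xF xV xF) (hβ x y xV xF yV yF) (hβ y y yV yF yV yF)
    (fun b => by rw [Fin.rev_rev, X.skew]) (fun b => by rw [Fin.rev_rev, X.skew])
  refine ⟨fun b => A b • x b + D b • y b, ?_, ?_, ?_, ?_, ?_⟩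
  · intro b
    exact Submodule.add_mem _ (Submodule.smul_mem _ _ (hxS b)) (Submodule.smul_mem _ _ (hyS b))
  · intro b h
    simp only [map_add, map_smulₛₗ]
    rw [xV b h, yV b h, hA b, hD b, tau_pow, tau_pow]
  · intro b h
    simp only [map_add, map_smulₛₗ]
    rw [xF b h, yF b h, frobenius_def, frobenius_def, ← hA b, ← hD b]
  · intro b
    have h1 := h0 b
    simp only [Fin.rev_rev] at h1
    simp only [map_add, map_smul, LinearMap.add_apply, LinearMap.smul_apply, smul_eq_mul]
    rw [X.skew (y b) (x (Fin.rev b))]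
    linear_combination h1
  · intro hz
    have hd : D b0 = 0 := by
      by_contra hd
      apply hy0
      have : y b0 = (D b0)⁻¹ • (A b0 • x b0 + D b0 • y b0) + (-(D b0)⁻¹ * A b0) • x b0 := by
        rw [smul_add, smul_smul, smul_smul, inv_mul_cancel₀ hd]; module
      rw [this]
      exact Submodule.add_mem _ (Submodule.mem_sup_left (Submodule.smul_mem _ _ hz))
        (Submodule.mem_sup_right (Submodule.smul_mem _ _ (Submodule.mem_span_singleton_self _)))
    have ha : A b0 ≠ 0 := (hne b0).resolve_right (fun h => h hd)
    apply hx0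
    have h2 := Submodule.smul_mem _ (A b0)⁻¹ hz
    simpa [hd, smul_smul, inv_mul_cancel₀ ha] using h2

end GFlag

/-- property for Zorn -/
def CP (C : Set (Submodule k X.M)) : Prop :=
  IsChain (· ≤ ·) C ∧ (∀ A ∈ C, X.orth A ∈ C) ∧
    ∀ A ∈ C, ∃ D ∈ C, A = D.map X.V ∨ A = D.comap X.F

theorem exists_max_CP : ∃ C, Maximal X.CP C := by
  refine zorn_subset {C | X.CP C} fun c hc hch => ⟨⋃₀ c, ⟨?_, ?_, ?_⟩, fun s hs => Set.subset_sUnion_of_mem hs⟩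
  · rintro A ⟨s, hs, hA⟩ D ⟨t, ht, hD⟩ hne
    rcases hch.total hs ht with h | h
    · exact (hc ht).1 (h hA) hD hne
    · exact (hc hs).1 hA (h hD) hne
  · rintro A ⟨s, hs, hA⟩
    exact ⟨s, hs, (hc hs).2.1 A hA⟩
  · rintro A ⟨s, hs, hA⟩
    obtain ⟨D, hD, h⟩ := (hc hs).2.2 A hA
    exact ⟨D, ⟨s, hs, hD⟩, h⟩

theorem exists_CP_flag : ∃ C, Maximal X.CP C ∧ ∃ l : ℕ, ∃ Γ : X.GFlag l,
    ∀ A, A ∈ C ↔ ∃ i, i ≤ 2 * l ∧ A = Γ.W i := by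
  obtain ⟨C, hC⟩ := X.exists_max_CP
  refine ⟨C, hC, ?_⟩
  obtain ⟨⟨h1, h2, h3⟩, hmax⟩ := hC
  have hbt : C ∪ {⊥, ⊤} ≤ C := by
    apply hmax _ Set.subset_union_left
    refine ⟨?_, ?_, ?_⟩
    · rintro A hA D hD hne
      rcases hA with hA | rfl | rfl
      · rcases hD with hD | rfl | rfl
        · exact h1 hA hD hne
        · exact Or.inr bot_le
        · exact Or.inl le_top
      · exact Or.inl bot_le
      · exact Or.inr le_top
    · rintro A (hA | rfl | rfl)
      · exact Or.inl (h2 A hA)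
      · rw [X.orth_bot]; simp
      · rw [X.orth_top]; simp
    · rintro A (hA | rfl | rfl)
      · obtain ⟨D, hD, h⟩ := h3 A hA
        exact ⟨D, Or.inl hD, h⟩
      · exact ⟨⊥, by simp, Or.inl (by simp)⟩
      · exact ⟨⊤, by simp, Or.inr (by simp)⟩
  let C' : Set (Submodule k X.M) := {A | ∃ D ∈ C, A = D.map X.V ∨ A = D.comap X.F}
  have hC'C : C ⊆ C' := h3
  have hC' : C' ⊆ C := by
    apply hmax _ hC'C
    have hVF : ∀ A D : Submodule k X.M, A.map X.V ≤ D.comap X.F := by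
      rintro A D _ ⟨a, _, rfl⟩
      rw [Submodule.mem_comap, X.F_V]; exact D.zero_mem
    refine ⟨?_, ?_, ?_⟩
    · rintro _ ⟨A, hA, rfl | rfl⟩ _ ⟨D, hD, rfl | rfl⟩ hne
      · exact (h1.total hA hD).imp (fun h => Submodule.map_mono h) (fun h => Submodule.map_mono h)
      · exact Or.inl (hVF _ _)
      · exact Or.inr (hVF _ _)
      · exact (h1.total hA hD).imp (fun h => Submodule.comap_mono h) (fun h => Submodule.comap_mono h)
    · rintro _ ⟨A, hA, rfl | rfl⟩
      · exact ⟨_, h2 A hA, Or.inr (X.orth_V A)⟩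
      · exact ⟨_, h2 A hA, Or.inl (X.orth_F A)⟩
    · rintro _ ⟨A, hA, h⟩
      exact ⟨A, hC'C hA, h⟩
  exact X.chain_flag C h1 (hbt (by simp)) (hbt (by simp)) (fun A hA => hC' ⟨A, hA, Or.inl rfl⟩)
    (fun A hA => hC' ⟨A, hA, Or.inr rfl⟩) h2

variable [IsAlgClosed k]

theorem exists_full : Nonempty (X.GFlag g) := by
  obtain ⟨C, ⟨⟨hch, hort, hVF⟩, hmax⟩, l, Γ, hΓ⟩ := X.exists_CP_flag
  suffices h : l = g by subst h; exact ⟨Γ⟩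
  by_contra hlg
  have hl : l < g := lt_of_le_of_ne Γ.l_le hlg
  obtain ⟨b0, hb0⟩ : ∃ b0 : Fin (2 * l), finrank k (Γ.W b0) + 2 ≤ finrank k (Γ.W (b0 + 1)) := by
    by_contra! hc
    have : ∀ i, i ≤ 2 * l → finrank k (Γ.W i) ≤ i := by
      intro i
      induction i with
      | zero => intro _; rw [Γ.W0]; simp
      | succ i ih =>
        intro hi
        have h1 := hc ⟨i, by omega⟩
        have h2 := ih (by omega)
        simp only at h1
        omega
    have h3 := this (2 * l) le_rfl
    rw [Γ.Wt, finrank_top, X.hdim] at h3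
    omega
  obtain ⟨z, hz, zV, zF, zB, hz0⟩ := Γ.exists_refine b0 hb0
  set π := Γ.hv.perm with hπ
  let Y : Fin (2 * l) → Submodule k X.M := fun b => Γ.W b ⊔ Submodule.span k {z b}
  have Y1 : ∀ b : Fin (2 * l), Γ.W b ≤ Y b := fun b => le_sup_left
  have Y2 : ∀ b : Fin (2 * l), Y b ≤ Γ.W (b+1) := fun b => sup_le (Γ.Wle b) (by
    rw [Submodule.span_singleton_le_iff_mem]; exact hz b)
  have YV : ∀ b : Fin (2 * l), eps Γ.v b → (Y b).map X.V = Y (π b) := by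
    intro b h
    simp only [Y]
    rw [Submodule.map_sup, Γ.V0 h, Submodule.map_span, Set.image_singleton, zV b h]
  have YF : ∀ b : Fin (2 * l), ¬ eps Γ.v b → (Y b).comap X.F = Y (π b) := by
    intro b h
    apply le_antisymm
    · intro y hy
      rw [Submodule.mem_comap] at hy
      obtain ⟨w, hw, c, hc, hs⟩ := Submodule.mem_sup.mp hy
      obtain ⟨a, rfl⟩ := Submodule.mem_span_singleton.mp hc
      have h1 : y - ((frobeniusEquiv k p).symm : k →+* k) a • z (π b) ∈ Γ.W (π b) := by
        rw [hπ, ← Γ.F0 h, Submodule.mem_comap, map_sub, map_smulₛₗ, frobenius_def, tau_pow', ← hπ, zF b h, ← hs]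
        simpa using hw
      have h2 := Submodule.add_mem_sup h1 (Submodule.smul_mem _ (((frobeniusEquiv k p).symm : k →+* k) a)
        (Submodule.mem_span_singleton_self (R := k) (z (π b))))
      simpa using h2
    · refine sup_le ?_ ?_
      · rw [hπ, ← Γ.F0 h]; exact Submodule.comap_mono (Y1 b)
      · rw [Submodule.span_singleton_le_iff_mem, Submodule.mem_comap, zF b h]
        exact Submodule.mem_sup_right (Submodule.mem_span_singleton_self _)
  have Yo : ∀ b, Y b ≤ X.orth (Y (Fin.rev b)) := by
    intro b x hx y hy
    obtain ⟨w, hw, c, hc, rfl⟩ := Submodule.mem_sup.mp hx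
    obtain ⟨w', hw', c', hc', rfl⟩ := Submodule.mem_sup.mp hy
    obtain ⟨a, rfl⟩ := Submodule.mem_span_singleton.mp hc
    obtain ⟨a', rfl⟩ := Submodule.mem_span_singleton.mp hc'
    have h1 : ∀ u ∈ Γ.W (b+1), X.B w' u = 0 := by
      intro u hu
      rw [← Γ.orth_rev] at hu
      exact hu w' hw'
    have h2 : X.B (z (Fin.rev b)) w = 0 := by
      have h3 : z (Fin.rev b) ∈ X.orth (Γ.W b) := by
        have := Γ.orth_rev (Fin.rev b)
        rw [Fin.rev_rev] at this
        rw [this]; exact hz _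
      rw [X.skew, h3 w hw, neg_zero]
    have h4 := zB (Fin.rev b)
    rw [Fin.rev_rev] at h4
    simp [h1 w (Γ.Wle b hw), h1 _ (hz b), h2, h4]
  have Yo1 : ∀ b : Fin (2 * l), Γ.W b ≤ X.orth (Y (Fin.rev b)) := fun b => (Y1 b).trans (Yo b)
  have Yo2 : ∀ b : Fin (2 * l), X.orth (Y (Fin.rev b)) ≤ Γ.W (b+1) := fun b => by
    rw [← Γ.orth_rev]; exact X.orth_anti (Y1 _)
  let C' : Set (Submodule k X.M) := C ∪ ({A | ∃ b, A = Y b} ∪ {A | ∃ b, A = X.orth (Y b)})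
  have hint : ∀ A ∈ C', ∃ i j, i ≤ 2 * l ∧ j ≤ 2 * l ∧ Γ.W i ≤ A ∧ A ≤ Γ.W j ∧
      (i = j ∨ j = i + 1 ∧ ∃ b : Fin (2 * l), (b : ℕ) = i ∧ (A = Y b ∨ A = X.orth (Y (Fin.rev b)))) := by
    rintro A (hA | ⟨b, rfl⟩ | ⟨b, rfl⟩)
    · obtain ⟨i, hi, rfl⟩ := (hΓ A).mp hA
      exact ⟨i, i, hi, hi, le_rfl, le_rfl, Or.inl rfl⟩
    · exact ⟨b, b+1, by omega, by omega, Y1 b, Y2 b, Or.inr ⟨rfl, b, rfl, Or.inl rfl⟩⟩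
    · have e1 := Yo1 (Fin.rev b)
      have e2 := Yo2 (Fin.rev b)
      rw [Fin.rev_rev] at e1 e2
      exact ⟨Fin.rev b, Fin.rev b+1, by omega, by omega, e1, e2, Or.inr ⟨rfl, Fin.rev b, rfl, Or.inr (by rw [Fin.rev_rev])⟩⟩
  have hCP : X.CP C' := by
    refine ⟨?_, ?_, ?_⟩
    · intro A hA D hD _
      obtain ⟨i, j, hi, hj, h1, h2, h3⟩ := hint A hA
      obtain ⟨i', j', hi', hj', h1', h2', h3'⟩ := hint D hD
      by_cases c1 : j ≤ i'
      · exact Or.inl (h2.trans (((Γ.le_iff hj hi').mpr c1).trans h1'))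
      by_cases c2 : j' ≤ i
      · exact Or.inr (h2'.trans (((Γ.le_iff hj' hi).mpr c2).trans h1))
      rcases h3 with h3 | ⟨h3, b, hb, hAb⟩
      · omega
      rcases h3' with h3' | ⟨h3', b', hb', hDb⟩
      · omega
      have : b = b' := Fin.ext (by omega)
      subst this
      rcases hAb with rfl | rfl <;> rcases hDb with rfl | rfl
      · exact Or.inl le_rfl
      · exact Or.inl (Yo b)
      · exact Or.inr (Yo b)
      · exact Or.inl le_rfl
    · rintro A (hA | ⟨b, rfl⟩ | ⟨b, rfl⟩)
      · exact Or.inl (hort A hA)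
      · exact Or.inr (Or.inr ⟨b, rfl⟩)
      · exact Or.inr (Or.inl ⟨b, X.orth_orth _⟩)
    · rintro A (hA | ⟨c, rfl⟩ | ⟨c, rfl⟩)
      · obtain ⟨D, hD, h⟩ := hVF A hA
        exact ⟨D, Or.inl hD, h⟩
      · obtain ⟨b, rfl⟩ := π.surjective c
        refine ⟨Y b, Or.inr (Or.inl ⟨b, rfl⟩), ?_⟩
        by_cases h : eps Γ.v b
        · exact Or.inl (YV b h).symm
        · exact Or.inr (YF b h).symm
      · obtain ⟨b, rfl⟩ := π.surjective c
        refine ⟨X.orth (Y b), Or.inr (Or.inr ⟨b, rfl⟩), ?_⟩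
        by_cases h : eps Γ.v b
        · exact Or.inr (by rw [← YV b h, X.orth_V])
        · exact Or.inl (by rw [← YF b h, X.orth_F])
  have hCC := hmax hCP Set.subset_union_left
  obtain ⟨i, hi, h⟩ := (hΓ (Y b0)).mp (hCC (Or.inr (Or.inl ⟨b0, rfl⟩)))
  have c1 : (b0 : ℕ) ≤ i := by rw [← Γ.le_iff (by omega) hi, ← h]; exact Y1 b0
  have c2 : i ≤ b0 + 1 := by rw [← Γ.le_iff hi (by omega), ← h]; exact Y2 b0
  rcases Nat.lt_or_eq_of_le c1 with c1 | c1
  · have : i = b0 + 1 := by omega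
    have h2 := Submodule.finrank_add_le_finrank_add_finrank (Γ.W b0) (Submodule.span k {z b0})
    have h3 := finrank_span_le_card (R := k) ({z b0} : Set X.M)
    simp at h3
    rw [this] at h
    have h4 : finrank k (Γ.W b0 ⊔ Submodule.span k {z b0} : Submodule k X.M) = finrank k (Γ.W (b0+1)) := by rw [← h]
    omega
  · rw [← c1] at h
    apply hz0
    rw [← h]
    exact Submodule.mem_sup_right (Submodule.mem_span_singleton_self _)

end PolarizedBT1Space

open Module Polynomial
set_option linter.unusedSectionVars false

namespace PolarizedBT1Space
variable {p : ℕ} [Fact p.Prime] {k : Type} [Field k] [CharP k p] [PerfectRing k p] {g : ℕ}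

/-- sign -/
def sg (k : Type) [Field k] {g : ℕ} (i : Fin (2 * g)) : k := if (i : ℕ) < g then 1 else -1

theorem sg_mul (i : Fin (2 * g)) : sg k i * sg k i = 1 := by
  unfold sg; split_ifs <;> simp

theorem sg_ne (i : Fin (2 * g)) : sg k i ≠ 0 := by
  unfold sg; split_ifs <;> simp

theorem sg_pow (i : Fin (2 * g)) : sg k i ^ p = sg k i := by
  unfold sg; split_ifs
  · simp
  · rw [neg_pow_p, one_pow]

theorem sg_rev (i : Fin (2 * g)) : sg k (Fin.rev i) = - sg k i := by
  unfold sg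
  have := Fin.val_rev i
  by_cases h : (i : ℕ) < g
  · rw [if_pos h, if_neg (by omega)]
  · rw [if_neg h, if_pos (by omega), neg_neg]

theorem sg_eps {v : ℕ → ℕ} (hv : VT g v) {i : Fin (2 * g)} (h : eps v i) : sg k (hv.perm i) = 1 := by
  unfold sg; rw [if_pos ((hv.perm_lt_iff i).mpr h)]

theorem sg_neps {v : ℕ → ℕ} (hv : VT g v) {i : Fin (2 * g)} (h : ¬ eps v i) : sg k (hv.perm i) = -1 := by
  unfold sg; rw [if_neg (fun hh => h ((hv.perm_lt_iff i).mp hh))]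

variable (X : PolarizedBT1Space p k g)

/-- the F, V relations -/
structure Rel {v : ℕ → ℕ} (hv : VT g v) (x : Fin (2 * g) → X.M) : Prop where
  V : ∀ i, eps v (i : Fin (2 * g)) → X.V (x i) = x (hv.perm i)
  F : ∀ i, ¬ eps v (i : Fin (2 * g)) → X.F (x (hv.perm i)) = (- sg k i) • x i
  B : ∀ i, X.B (x i) (x (Fin.rev i)) = sg k i

namespace GFlag
variable {X} [IsAlgClosed k] (Γ : X.GFlag g)

theorem stepA : ∃ x : Fin (2 * g) → X.M, X.Rel Γ.hv x ∧
    ∀ i j : Fin (2 * g), (i : ℕ) + j + 1 < 2 * g → X.B (x i) (x j) = 0 := by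
  classical
  set π := Γ.hv.perm with hπ
  have ex : ∀ i : Fin (2 * g), ∃ a ∈ Γ.W (i+1), a ∉ Γ.W i := fun i =>
    Set.exists_of_ssubset (Γ.lt i (i+1) (by omega) (by omega))
  choose a ha1 ha0 using ex
  have blk : ∀ i : Fin (2 * g), ∀ w ∈ Γ.W (i+1), ∃ c : k, w - c • a i ∈ Γ.W i := by
    intro i w hw
    have h1 : Γ.W i ⊔ Submodule.span k {a i} = Γ.W (i+1) := by
      have hle : Γ.W i ⊔ Submodule.span k {a i} ≤ Γ.W (i+1) := sup_le (Γ.Wle i) (by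
        rw [Submodule.span_singleton_le_iff_mem]; exact ha1 i)
      refine Submodule.eq_of_le_of_finrank_le hle ?_
      have h2 : Γ.W i < Γ.W i ⊔ Submodule.span k {a i} := by
        refine lt_of_le_of_ne le_sup_left fun h => ha0 i ?_
        rw [h]; exact Submodule.mem_sup_right (Submodule.mem_span_singleton_self _)
      have h3 := Submodule.finrank_lt_finrank_of_lt h2
      rw [Γ.finrank_eq (by omega)] at h3
      rw [Γ.finrank_eq (by omega)]
      omega
    rw [← h1] at hw
    obtain ⟨u, hu, c, hc, rfl⟩ := Submodule.mem_sup.mp hw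
    obtain ⟨c, rfl⟩ := Submodule.mem_span_singleton.mp hc
    exact ⟨c, by simpa using hu⟩
  -- orthogonality
  have or1 : ∀ i : Fin (2 * g), ∀ u ∈ Γ.W i, ∀ w ∈ Γ.W (Fin.rev i + 1), X.B u w = 0 := by
    intro i u hu w hw
    rw [← Γ.orth_rev, Fin.rev_rev] at hw
    exact hw u hu
  have or2 : ∀ i : Fin (2 * g), ∀ u ∈ Γ.W (i + 1), ∀ w ∈ Γ.W (Fin.rev i), X.B u w = 0 := by
    intro i u hu w hw
    rw [X.skew, or1 (Fin.rev i) w hw u (by rw [Fin.rev_rev]; exact hu), neg_zero]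
  have hb : ∀ i, X.B (a i) (a (Fin.rev i)) ≠ 0 := by
    intro i h
    apply ha0 (Fin.rev i)
    have h1 : a (Fin.rev i) ∈ X.orth (Γ.W (i+1)) := by
      intro w hw
      obtain ⟨c, hc⟩ := blk i w hw
      have h2 := or1 i _ hc _ (ha1 (Fin.rev i))
      simpa [h] using h2
    rw [Γ.ho _ (by omega)] at h1
    rw [Fin.val_rev]; exact h1
  have elam : ∀ i : Fin (2 * g), ∃ c : k, eps Γ.v i → c ≠ 0 ∧ X.V (a i) - c • a (π i) ∈ Γ.W (π i) := by
    intro i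
    by_cases h : eps Γ.v i
    · have h1 : X.V (a i) ∈ Γ.W (π i + 1) := by rw [hπ, ← Γ.V1 h]; exact ⟨_, ha1 i, rfl⟩
      obtain ⟨c, hc⟩ := blk _ _ h1
      refine ⟨c, fun _ => ⟨?_, hc⟩⟩
      rintro rfl
      exact ha0 i (Γ.mem_of_V h (ha1 i) (by simpa using hc))
    · exact ⟨0, fun h' => absurd h' h⟩
  have erho : ∀ i : Fin (2 * g), ∃ c : k, ¬ eps Γ.v i → c ≠ 0 ∧ X.F (a (π i)) - c • a i ∈ Γ.W i := by
    intro i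
    by_cases h : eps Γ.v i
    · exact ⟨0, fun h' => absurd h h'⟩
    · have h1 : X.F (a (π i)) ∈ Γ.W (i + 1) := by
        rw [← Submodule.mem_comap, Γ.F1 h]; exact ha1 _
      obtain ⟨c, hc⟩ := blk _ _ h1
      refine ⟨c, fun _ => ⟨?_, hc⟩⟩
      rintro rfl
      apply ha0 (π i)
      rw [hπ, ← Γ.F0 h, Submodule.mem_comap]; simpa using hc
  choose lam hlam using elam
  choose rho hrho using erho
  let R : Fin (2 * g) → k := fun i => if eps Γ.v i then (lam i ^ p)⁻¹ else - sg k i * rho i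
  have R1 : ∀ i : Fin (2 * g), eps Γ.v i → R i = (lam i ^ p)⁻¹ := fun i h => if_pos h
  have R2 : ∀ i : Fin (2 * g), ¬ eps Γ.v i → R i = - sg k i * rho i := fun i h => if_neg h
  let μ : Fin (2 * g) → k := fun i => sg k i / X.B (a i) (a (Fin.rev i))
  have hμr : ∀ i, μ (Fin.rev i) = μ i := by
    intro i; simp only [μ]; rw [sg_rev, Fin.rev_rev, X.skew, neg_div_neg_eq]
  have main : ∀ i : Fin (2 * g), eps Γ.v i → R i * R (Fin.rev i) * μ (π i) ^ p = μ i := by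
    intro i h
    have h' : ¬ eps Γ.v (Fin.rev i) := by rw [Γ.hv.eps_rev]; exact fun hh => hh h
    have e1 : X.B (X.V (a i)) (a (Fin.rev (π i))) = lam i * X.B (a (π i)) (a (Fin.rev (π i))) := by
      have := or1 _ _ (hlam i h).2 _ (ha1 (Fin.rev (π i)))
      simp only [map_sub, map_smul, LinearMap.sub_apply, LinearMap.smul_apply, smul_eq_mul] at this
      linear_combination this
    have e2 : X.B (a i) (X.F (a (π (Fin.rev i)))) = rho (Fin.rev i) * X.B (a i) (a (Fin.rev i)) := by
      have := or2 _ _ (ha1 i) _ (hrho _ h').2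
      simp only [map_sub, map_smul, smul_eq_mul] at this
      linear_combination this
    have e3 := X.compat2 (a i) (a (Fin.rev (π i)))
    rw [e1, hπ, ← Γ.hv.perm_rev, ← hπ, e2, hπ, Γ.hv.perm_rev, ← hπ, mul_pow] at e3
    rw [R1 i h, R2 _ h', sg_rev]
    simp only [μ]
    rw [div_pow, hπ, sg_eps Γ.hv h, one_pow, ← hπ]
    have n1 : lam i ^ p ≠ 0 := pow_ne_zero _ (hlam i h).1
    have n2 : X.B (a (π i)) (a (Fin.rev (π i))) ^ p ≠ 0 := pow_ne_zero _ (hb _)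
    have n3 := hb i
    field_simp
    linear_combination -(sg k i) * e3
  obtain ⟨t, ht0, htR, htμ⟩ := torus (p := p) (k := k) π Fin.rev Fin.rev_rev Γ.hv.perm_rev
    (fun b => eps Γ.v b) Γ.hv.eps_rev R μ (by
      intro i
      by_cases h : eps Γ.v i
      · rw [R1 i h]; exact inv_ne_zero (pow_ne_zero _ (hlam i h).1)
      · rw [R2 i h]; exact mul_ne_zero (neg_ne_zero.mpr (sg_ne i)) (hrho i h).1)
    (fun i => div_ne_zero (sg_ne i) (hb i)) hμr (by
      intro i
      by_cases h : eps Γ.v i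
      · exact main i h
      · have := main (Fin.rev i) (by rw [Γ.hv.eps_rev]; exact h)
        rw [hμr, Fin.rev_rev, hπ, Γ.hv.perm_rev, ← hπ, hμr] at this
        rw [← this]; ring)
  let y : Fin (2 * g) → X.M := fun i => t i • a i
  have hy1 : ∀ i : Fin (2 * g), y i ∈ Γ.W (i+1) := fun i => Submodule.smul_mem _ _ (ha1 i)
  have hyV : ∀ i : Fin (2 * g), eps Γ.v i → y (π i) - X.V (y i) ∈ Γ.W (π i) := by
    intro i h
    have h1 := (hlam i h)
    have h2 : X.V (y i) = ((frobeniusEquiv k p).symm : k →+* k) (t i) • X.V (a i) := by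
      simp only [y]; rw [map_smulₛₗ]
    have h3 : t (π i) = ((frobeniusEquiv k p).symm : k →+* k) (t i) * lam i := by
      apply pow_p_inj (p := p)
      rw [mul_pow, tau_pow', htR i, R1 i h]
      have := pow_ne_zero p h1.1
      field_simp
    have h4 := Submodule.smul_mem _ (-((frobeniusEquiv k p).symm : k →+* k) (t i)) h1.2
    convert h4 using 1
    simp only [y]
    rw [map_smulₛₗ, h3]
    module
  have hyF : ∀ i : Fin (2 * g), ¬ eps Γ.v i → (- sg k i) • X.F (y (π i)) - y i ∈ Γ.W i := by
    intro i h
    have h1 := (hrho i h)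
    have h4 := Submodule.smul_mem _ ((- sg k i) * t (π i) ^ p) h1.2
    convert h4 using 1
    simp only [y]
    rw [map_smulₛₗ, frobenius_def]
    conv_lhs => rw [htR i, R2 i h]
    module
  -- solve
  choose Sec hSec using X.exists_sec
  let G : Fin (2 * g) → X.M →ₛₗ[frobenius k p] X.M := fun b =>
    if eps Γ.v b then Sec (Γ.W b) else (- sg k b) • X.F
  have G1 : ∀ b : Fin (2 * g), eps Γ.v b → G b = Sec (Γ.W b) := fun b h => if_pos h
  have G2 : ∀ b : Fin (2 * g), ¬ eps Γ.v b → G b = (- sg k b) • X.F := fun b h => if_neg h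
  let f := shiftMap π G
  let S : Submodule k (Fin (2 * g) → X.M) := Submodule.pi Set.univ fun b => Γ.W b
  have mS : ∀ x, x ∈ S ↔ ∀ b : Fin (2 * g), x b ∈ Γ.W b := by intro x; simp [S, Submodule.mem_pi]
  have hS : ∀ x ∈ S, f x ∈ S := by
    intro x hx
    rw [mS] at hx ⊢
    intro b
    show G b (x (π b)) ∈ _
    by_cases h : eps Γ.v b
    · rw [G1 b h]; exact (hSec _ _ (by rw [Γ.V0 h]; exact hx (π b))).1
    · rw [G2 b h, LinearMap.smul_apply]
      apply Submodule.smul_mem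
      rw [← Submodule.mem_comap, Γ.F0 h]; exact hx _
  have eν : ∀ i : Fin (2 * g), ∃ n ∈ Γ.W i, (eps Γ.v i → X.V n = y (π i) - X.V (y i)) ∧
      (¬ eps Γ.v i → n = (- sg k i) • X.F (y (π i)) - y i) := by
    intro i
    by_cases h : eps Γ.v i
    · have := hyV i h
      rw [hπ, ← Γ.V0 h, ← hπ] at this
      obtain ⟨n, hn, hn2⟩ := this
      exact ⟨n, hn, fun _ => hn2, fun h' => absurd h h'⟩
    · exact ⟨_, hyF i h, fun h' => absurd h' h, fun _ => rfl⟩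
  choose n hnW hnV hnF using eν
  obtain ⟨u, huS, hu⟩ := lemmaL f S hS n ((mS n).mpr hnW)
  rw [mS] at huS
  have hu' : ∀ i, u i = G i (u (π i)) + n i := by
    intro i
    have : u i - G i (u (π i)) = n i := congrFun hu i
    rw [← this]; abel
  have hx1 : ∀ i : Fin (2 * g), y i + u i ∈ Γ.W (i+1) := fun i =>
    Submodule.add_mem _ (hy1 i) (Γ.Wle i (huS i))
  refine ⟨fun i => y i + u i, ⟨?_, ?_, ?_⟩, ?_⟩
  · intro i h
    have h1 := (hSec (Γ.W i) (u (π i)) (by rw [Γ.V0 h]; exact huS (π i))).2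
    rw [map_add, hu' i, map_add, G1 i h, h1, hnV i h, ← hπ]
    abel
  · intro i h
    rw [← hπ, map_add, hu' i, G2 i h, LinearMap.smul_apply, hnF i h]
    have := sg_mul (k := k) i
    have e : (- sg k i) • (y i + ((- sg k i) • X.F (u (π i)) + ((- sg k i) • X.F (y (π i)) - y i))) =
      (sg k i * sg k i) • (X.F (y (π i)) + X.F (u (π i))) := by module
    rw [e, this, one_smul]
  · intro i
    have e0 := htμ i
    have e1 := or1 i _ (huS i) _ (hx1 (Fin.rev i))
    have e2 := or2 i _ (hy1 i) _ (huS (Fin.rev i))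
    show X.B (y i + u i) (y (Fin.rev i) + u (Fin.rev i)) = sg k i
    rw [map_add X.B, LinearMap.add_apply, e1, map_add, e2]
    simp only [y, map_smul, LinearMap.smul_apply, smul_eq_mul]
    simp only [μ] at e0
    have := hb i
    rw [eq_div_iff this] at e0
    linear_combination e0
  · intro i j hij
    have h1 : y j + u j ∈ X.orth (Γ.W (i+1)) := by
      rw [Γ.ho _ (by omega)]
      exact (Γ.le_iff (by omega) (by omega)).mpr (by omega) (hx1 j)
    exact h1 _ (hx1 i)

end GFlag
end PolarizedBT1Space

open Module Polynomial
set_option linter.unusedSectionVars false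

namespace PolarizedBT1Space
variable {p : ℕ} [Fact p.Prime] {k : Type} [Field k] [CharP k p] [PerfectRing k p] {g : ℕ}
variable {X : PolarizedBT1Space p k g}

namespace Rel
variable {v : ℕ → ℕ} {hv : VT g v} {x : Fin (2 * g) → X.M} (hx : X.Rel hv x)
include hx

theorem V0 {i : Fin (2 * g)} (h : ¬ eps v i) : X.V (x i) = 0 := by
  have h1 := hx.F i h
  have h2 := congrArg X.V h1
  rw [X.V_F, map_smulₛₗ] at h2
  rcases smul_eq_zero.mp h2.symm with h3 | h3
  · rw [map_eq_zero, neg_eq_zero] at h3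
    exact absurd h3 (sg_ne i)
  · exact h3

theorem F0 {i : Fin (2 * g)} (h : eps v i) : X.F (x (hv.perm i)) = 0 := by
  rw [← hx.V i h, X.F_V]

theorem mixed {i j : Fin (2 * g)} (hi : eps v i) (hj : ¬ eps v j) :
    X.B (x i) (x j) = - sg k j * X.B (x (hv.perm i)) (x (hv.perm j)) ^ p := by
  rw [← hx.V i hi, X.compat2, hx.F j hj, map_smul, smul_eq_mul]
  linear_combination (- X.B (x i) (x j)) * sg_mul (k := k) j

theorem mixed' {i j : Fin (2 * g)} (hi : ¬ eps v i) (hj : eps v j) :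
    X.B (x i) (x j) = - sg k i * X.B (x (hv.perm i)) (x (hv.perm j)) ^ p := by
  rw [X.skew, hx.mixed hj hi, X.skew (x (hv.perm i)), neg_pow_p]; ring

theorem nn {i j : Fin (2 * g)} (hi : ¬ eps v i) (hj : ¬ eps v j) : X.B (x i) (x j) = 0 := by
  have h1 : X.B (X.V (x i)) (x (hv.perm j)) ^ p = _ := X.compat2 _ _
  rw [hx.V0 hi, hx.F j hj, map_smul, smul_eq_mul, map_zero, LinearMap.zero_apply,
    zero_pow (Fact.out : p.Prime).ne_zero] at h1
  rcases mul_eq_zero.mp h1.symm with h3 | h3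
  · exact absurd (neg_eq_zero.mp h3) (sg_ne j)
  · exact h3

theorem ee {i j : Fin (2 * g)} (hi : eps v i) (hj : eps v j) :
    X.B (x (hv.perm i)) (x (hv.perm j)) = 0 := by
  rw [← hx.V i hi]
  apply pow_p_zero (p := p).mp
  rw [X.compat2, hx.F0 hj, map_zero]

end Rel

/-- the coefficient E -/
def EE (k : Type) [Field k] {g : ℕ} (v : ℕ → ℕ) (i j : Fin (2 * g)) : k :=
  if eps v i then (if eps v j then 0 else - sg k j) else (if eps v j then - sg k i else 0)

theorem EE_symm (v : ℕ → ℕ) (i j : Fin (2 * g)) : EE k v i j = EE k v j i := by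
  unfold EE; split_ifs <;> rfl

theorem stepB [IsAlgClosed k] {v : ℕ → ℕ} {hv : VT g v} {x : Fin (2 * g) → X.M} (hx : X.Rel hv x)
    (K : ℕ) (hK1 : 1 ≤ K)
    (hK : ∀ i j : Fin (2 * g), j ≠ Fin.rev i → (i : ℕ) + j + 1 < 2 * g + K → X.B (x i) (x j) = 0) :
    ∃ x' : Fin (2 * g) → X.M, X.Rel hv x' ∧
      ∀ i j : Fin (2 * g), j ≠ Fin.rev i → (i : ℕ) + j + 1 < 2 * g + (K + 1) → X.B (x' i) (x' j) = 0 := by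
  classical
  have hp0 : p ≠ 0 := (Fact.out : p.Prime).ne_zero
  set π := hv.perm with hπ
  have πrev : ∀ i, π (Fin.rev i) = Fin.rev (π i) := hv.perm_rev
  have erev : ∀ i : Fin (2 * g), eps v (Fin.rev i) ↔ ¬ eps v i := hv.eps_rev
  have prev : ∀ i j, π j = Fin.rev (π i) ↔ j = Fin.rev i := by
    intro i j; rw [← πrev]; exact π.injective.eq_iff
  let c : Fin (2 * g) → Fin (2 * g) → k := fun i j => if j = Fin.rev i then 0 else X.B (x i) (x j)
  have revc : ∀ i j : Fin (2 * g), j = Fin.rev i ↔ i = Fin.rev j := by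
    intro i j; constructor <;> (rintro rfl; rw [Fin.rev_rev])
  have cskew : ∀ i j, c j i = - c i j := by
    intro i j
    simp only [c]
    by_cases h : j = Fin.rev i
    · rw [if_pos h, if_pos ((revc i j).mp h), neg_zero]
    · rw [if_neg h, if_neg (fun hh => h ((revc i j).mpr hh)), X.skew]
  have cE : ∀ i j : Fin (2 * g), (eps v i ↔ ¬ eps v j) → c i j = EE k v i j * c (π i) (π j) ^ p := by
    intro i j hm
    simp only [c, prev]
    by_cases h : j = Fin.rev i
    · rw [if_pos h, if_pos h, zero_pow hp0, mul_zero]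
    · rw [if_neg h, if_neg h]
      unfold EE
      by_cases hi : eps v i
      · have hj := hm.mp hi
        rw [if_pos hi, if_neg hj]; exact hx.mixed hi hj
      · have hj : eps v j := by by_contra hj; exact hi (hm.mpr hj)
        rw [if_neg hi, if_pos hj]; exact hx.mixed' hi hj
  have E0 : ∀ i j : Fin (2 * g), ¬ (eps v i ↔ ¬ eps v j) → EE k v i j = 0 := by
    intro i j hm
    unfold EE
    by_cases hi : eps v i
    · by_cases hj : eps v j
      · rw [if_pos hi, if_pos hj]
      · exact absurd ⟨fun _ => hj, fun _ => hi⟩ hm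
    · by_cases hj : eps v j
      · exact absurd ⟨fun h => absurd h hi, fun h => absurd hj h⟩ hm
      · rw [if_neg hi, if_neg hj]
  have Ene : ∀ i j : Fin (2 * g), (eps v i ↔ ¬ eps v j) → EE k v i j ≠ 0 := by
    intro i j hm
    have h1 := sg_ne (k := k) i
    have h2 := sg_ne (k := k) j
    unfold EE
    by_cases hi : eps v i
    · rw [if_pos hi, if_neg (hm.mp hi)]; exact neg_ne_zero.mpr h2
    · have hj : eps v j := by by_contra hj; exact hi (hm.mpr hj)
      rw [if_neg hi, if_pos hj]; exact neg_ne_zero.mpr h1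
  have cpi : ∀ i j : Fin (2 * g), (eps v i ↔ ¬ eps v j) → c i j = 0 → c (π i) (π j) = 0 := by
    intro i j hm h
    rw [cE i j hm] at h
    exact pow_p_zero.mp ((mul_eq_zero.mp h).resolve_left (Ene i j hm))
  have cnn : ∀ i j : Fin (2 * g), ¬ eps v i → ¬ eps v j → c i j = 0 := by
    intro i j hi hj; simp only [c]; rw [hx.nn hi hj, ite_self]
  have cee : ∀ i j : Fin (2 * g), eps v i → eps v j → c (π i) (π j) = 0 := by
    intro i j hi hj; simp only [c]; rw [hx.ee hi hj, ite_self]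
  -- the semilinear system
  let Q := Fin (2 * g) → Fin (2 * g) → k
  let f : Q →ₛₗ[frobenius k p] Q :=
    { toFun := fun s i j => EE k v i j * s (π i) (π j) ^ p
      map_add' := fun s t => by
        funext i j
        show EE k v i j * (s (π i) (π j) + t (π i) (π j)) ^ p = _ + _
        rw [add_pow_char, mul_add]
      map_smul' := fun a s => by
        funext i j
        show EE k v i j * (a * s (π i) (π j)) ^ p = a ^ p * _
        rw [mul_pow]; ring }
  have hf : ∀ s i j, f s i j = EE k v i j * s (π i) (π j) ^ p := fun _ _ _ => rfl
  let S : Submodule k Q :=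
    { carrier := {s | (∀ i j, s i j = s j i) ∧ ∀ i j, c i j = 0 → s i j = 0}
      add_mem' := fun {s t} hs ht => ⟨fun i j => by
          show s i j + t i j = s j i + t j i
          rw [hs.1, ht.1], fun i j h => by
          show s i j + t i j = 0
          rw [hs.2 i j h, ht.2 i j h, add_zero]⟩
      zero_mem' := ⟨fun _ _ => rfl, fun _ _ _ => rfl⟩
      smul_mem' := fun a s hs => ⟨fun i j => by
          show a * s i j = a * s j i
          rw [hs.1], fun i j h => by
          show a * s i j = 0
          rw [hs.2 i j h, mul_zero]⟩ }
  have hS : ∀ s ∈ S, f s ∈ S := by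
    rintro s ⟨h1, h2⟩
    refine ⟨fun i j => ?_, fun i j h => ?_⟩
    · rw [hf, hf, EE_symm, h1]
    · rw [hf]
      by_cases hm : (eps v i ↔ ¬ eps v j)
      · rw [h2 _ _ (cpi i j hm h), zero_pow hp0, mul_zero]
      · rw [E0 i j hm, zero_mul]
  let t0 : Q := fun i j => if i < j then c i j else 0
  have t0skew : ∀ i j, t0 i j - t0 j i = c i j := by
    intro i j
    simp only [t0]
    rcases lt_trichotomy i j with h | h | h
    · rw [if_pos h, if_neg (not_lt.mpr h.le), sub_zero]
    · subst h
      have : c i i = 0 := by simp only [c]; rw [X.halt, ite_self]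
      rw [this]; simp
    · rw [if_pos h, if_neg (not_lt.mpr h.le), cskew i j]; simp
  have t00 : ∀ i j, c i j = 0 → t0 i j = 0 := by
    intro i j h; simp only [t0]; rw [h, ite_self]
  let r : Q := fun i j => if (eps v i ↔ ¬ eps v j) then t0 i j - EE k v i j * t0 (π i) (π j) ^ p else 0
  have hr1 : ∀ i j : Fin (2 * g), (eps v i ↔ ¬ eps v j) → r i j = t0 i j - EE k v i j * t0 (π i) (π j) ^ p :=
    fun i j h => if_pos h
  have hr0 : ∀ i j : Fin (2 * g), ¬ (eps v i ↔ ¬ eps v j) → r i j = 0 := fun i j h => if_neg h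
  have hrS : r ∈ S := by
    refine ⟨fun i j => ?_, fun i j h => ?_⟩
    · by_cases hm : (eps v i ↔ ¬ eps v j)
      · have hm' : (eps v j ↔ ¬ eps v i) := by tauto
        rw [hr1 i j hm, hr1 j i hm', EE_symm v j i]
        have h1 := t0skew i j
        have h2 := t0skew (π i) (π j)
        have h3 := cE i j hm
        rw [← h2, sub_pow_char] at h3
        linear_combination h1 + h3
      · have hm' : ¬ (eps v j ↔ ¬ eps v i) := by tauto
        rw [hr0 i j hm, hr0 j i hm']
    · by_cases hm : (eps v i ↔ ¬ eps v j)
      · rw [hr1 i j hm, t00 _ _ h, t00 _ _ (cpi i j hm h), zero_pow hp0, mul_zero, sub_zero]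
      · exact hr0 i j hm
  obtain ⟨s, ⟨hs1, hs2⟩, hs⟩ := lemmaL f S hS r hrS
  let θ : Q := fun i j => t0 i j - s i j
  have θskew : ∀ i j, θ i j - θ j i = c i j := by
    intro i j; simp only [θ]; rw [hs1 i j]; linear_combination t0skew i j
  have θ0 : ∀ i j, c i j = 0 → θ i j = 0 := by
    intro i j h; simp only [θ]; rw [t00 i j h, hs2 i j h, sub_zero]
  have θE : ∀ i j : Fin (2 * g), (eps v i ↔ ¬ eps v j) → θ i j = EE k v i j * θ (π i) (π j) ^ p := by
    intro i j hm
    have h1 : s i j - f s i j = r i j := congrFun (congrFun hs i) j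
    rw [hf, hr1 i j hm] at h1
    simp only [θ]
    rw [sub_pow_char]
    linear_combination - h1
  have clow : ∀ i j : Fin (2 * g), (i : ℕ) + j + 1 < 2 * g + K → c i j = 0 := by
    intro i j h
    simp only [c]
    by_cases h1 : j = Fin.rev i
    · rw [if_pos h1]
    · rw [if_neg h1]; exact hK i j h1 h
  let m : Q := fun i l => - sg k l * θ i (Fin.rev l)
  have hm0 : ∀ i l : Fin (2 * g), (i : ℕ) < l + K → m i l = 0 := by
    intro i l h
    simp only [m]
    rw [θ0, mul_zero]
    apply clow
    have := Fin.val_rev l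
    omega
  let n : Fin (2 * g) → X.M := fun i => ∑ l, m i l • x l
  have Bn : ∀ i z, X.B (n i) z = ∑ l, m i l * X.B (x l) z := by
    intro i z
    simp only [n, map_sum, LinearMap.sum_apply, map_smul, LinearMap.smul_apply, smul_eq_mul]
  have Bnx : ∀ i j : Fin (2 * g), (i : ℕ) + j + 1 < 2 * g + (K + 1) → X.B (n i) (x j) = - θ i j := by
    intro i j h
    rw [Bn, Finset.sum_eq_single (Fin.rev j)]
    · have h1 := hx.B (Fin.rev j)
      rw [Fin.rev_rev] at h1
      rw [h1]
      simp only [m, Fin.rev_rev]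
      linear_combination (- θ i j) * sg_mul (k := k) (Fin.rev j)
    · intro l _ hl
      by_cases h1 : (i : ℕ) < l + K
      · rw [hm0 i l h1, zero_mul]
      · rw [hK l j (fun hh => hl ((revc l j).mp hh)) (by omega), mul_zero]
    · intro h; exact absurd (Finset.mem_univ _) h
  have Bxn : ∀ i j : Fin (2 * g), (i : ℕ) + j + 1 < 2 * g + (K + 1) → X.B (x i) (n j) = θ j i := by
    intro i j h
    rw [X.skew, Bnx j i (by omega), neg_neg]
  have Bnn : ∀ i j : Fin (2 * g), (i : ℕ) + j + 1 < 2 * g + (K + 1) → X.B (n i) (n j) = 0 := by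
    intro i j h
    rw [Bn]
    apply Finset.sum_eq_zero
    intro l _
    by_cases h1 : (i : ℕ) < l + K
    · rw [hm0 i l h1, zero_mul]
    · rw [X.skew, Bn, Finset.sum_eq_zero, neg_zero, mul_zero]
      intro l' _
      by_cases h2 : (j : ℕ) < l' + K
      · rw [hm0 j l' h2, zero_mul]
      · rw [hK l' l, mul_zero]
        · rintro rfl
          have := Fin.val_rev l'
          omega
        · omega
  have gram : ∀ i j : Fin (2 * g), (i : ℕ) + j + 1 < 2 * g + (K + 1) →
      X.B (x i + n i) (x j + n j) = X.B (x i) (x j) - c i j := by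
    intro i j h
    rw [map_add X.B, LinearMap.add_apply, map_add, map_add, Bnx i j h, Bxn i j h, Bnn i j h, ← θskew i j]
    ring
  refine ⟨fun i => x i + n i, ⟨?_, ?_, ?_⟩, ?_⟩
  · intro i hi
    show X.V (x i + n i) = x (π i) + n (π i)
    rw [map_add, hx.V i hi, ← hπ]
    congr 1
    simp only [n, map_sum]
    rw [← Equiv.sum_comp π (fun l => m (π i) l • x l)]
    refine Finset.sum_congr rfl fun l _ => ?_
    rw [map_smulₛₗ]
    by_cases hl : eps v l
    · rw [hx.V l hl, ← hπ]
      congr 1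
      apply pow_p_inj (p := p)
      rw [tau_pow']
      have hl' : ¬ eps v (Fin.rev l) := fun h => (erev l).mp h hl
      simp only [m]
      rw [θE i (Fin.rev l) (by tauto), πrev, hπ, sg_eps hv hl, ← hπ]
      have : EE k v i (Fin.rev l) = sg k l := by
        unfold EE; rw [if_pos hi, if_neg hl', sg_rev, neg_neg]
      rw [this, neg_one_mul, neg_pow_p]
      linear_combination (- θ (π i) (Fin.rev (π l)) ^ p) * sg_mul (k := k) l
    · have : m (π i) (π l) = 0 := by
        simp only [m]
        rw [← πrev, θ0 _ _ (cee i (Fin.rev l) hi ((erev l).mpr hl)), mul_zero]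
      rw [this, zero_smul, hx.V0 hl, smul_zero]
  · intro i hi
    show X.F (x (π i) + n (π i)) = (- sg k i) • (x i + n i)
    rw [map_add, smul_add, hx.F i hi]
    congr 1
    simp only [n, map_sum, Finset.smul_sum]
    rw [← Equiv.sum_comp π]
    refine Finset.sum_congr rfl fun l _ => ?_
    rw [map_smulₛₗ, frobenius_def]
    by_cases hl : eps v l
    · have hl' : ¬ eps v (Fin.rev l) := fun h => (erev l).mp h hl
      have : m i l = 0 := by
        simp only [m]
        rw [θ0 _ _ (cnn i (Fin.rev l) hi hl'), mul_zero]
      rw [this, zero_smul, smul_zero, hπ, hx.F0 hl, smul_zero]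
    · have hl' := (erev l).mpr hl
      rw [hπ, hx.F l hl, ← hπ, smul_smul, smul_smul]
      congr 1
      simp only [m]
      rw [θE i (Fin.rev l) (by tauto), πrev, hπ, sg_neps hv hl, ← hπ]
      have : EE k v i (Fin.rev l) = - sg k i := by
        unfold EE; rw [if_neg hi, if_pos hl']
      rw [this, neg_neg, one_mul]
      linear_combination (sg k l * θ (π i) (Fin.rev (π l)) ^ p) * sg_mul (k := k) i
  · intro i
    show X.B (x i + n i) (x (Fin.rev i) + n (Fin.rev i)) = sg k i
    rw [gram, hx.B]
    · simp [c]
    · have := Fin.val_rev i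
      omega
  · intro i j hij h
    show X.B (x i + n i) (x j + n j) = 0
    rw [gram i j h]
    simp only [c]
    rw [if_neg hij, sub_self]

/-- standard basis -/
structure Std (X : PolarizedBT1Space p k g) {v : ℕ → ℕ} (hv : VT g v) (x : Fin (2 * g) → X.M) : Prop
    extends X.Rel hv x where
  B0 : ∀ i j : Fin (2 * g), j ≠ Fin.rev i → X.B (x i) (x j) = 0

theorem GFlag.exists_std [IsAlgClosed k] (Γ : X.GFlag g) : ∃ x, X.Std Γ.hv x := by
  have key : ∀ K : ℕ, ∃ x : Fin (2 * g) → X.M, X.Rel Γ.hv x ∧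
      ∀ i j : Fin (2 * g), j ≠ Fin.rev i → (i : ℕ) + j + 1 < 2 * g + (K + 1) → X.B (x i) (x j) = 0 := by
    intro K
    induction K with
    | zero =>
      obtain ⟨x, h1, h2⟩ := Γ.stepA
      refine ⟨x, h1, fun i j hij h => h2 i j ?_⟩
      have : (j : ℕ) ≠ Fin.rev i := fun hh => hij (Fin.ext hh)
      rw [Fin.val_rev] at this
      omega
    | succ K ih =>
      obtain ⟨x, h1, h2⟩ := ih
      exact stepB h1 (K + 1) (by omega) h2
  obtain ⟨x, h1, h2⟩ := key (2 * g)
  exact ⟨x, h1, fun i j hij => h2 i j hij (by omega)⟩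

theorem Std.exists_basis {v : ℕ → ℕ} {hv : VT g v} {x : Fin (2 * g) → X.M} (hx : X.Std hv x) :
    ∃ b : Basis (Fin (2 * g)) k X.M, ∀ i, b i = x i := by
  have li : LinearIndependent k x := by
    rw [Fintype.linearIndependent_iff]
    intro a ha i
    have h1 : X.B (∑ j, a j • x j) (x (Fin.rev i)) = 0 := by rw [ha, map_zero, LinearMap.zero_apply]
    simp only [map_sum, LinearMap.sum_apply, map_smul, LinearMap.smul_apply, smul_eq_mul] at h1
    rw [Finset.sum_eq_single i, hx.B] at h1
    · exact (mul_eq_zero.mp h1).resolve_right (sg_ne i)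
    · intro j _ hj
      rw [hx.B0, mul_zero]
      exact fun h => hj (Fin.rev_injective h).symm
    · intro h; exact absurd (Finset.mem_univ _) h
  refine ⟨basisOfLinearIndependentOfCardEqFinrank' x li (by simp [X.hdim]), fun i => ?_⟩
  simp

theorem Std.iso {Y : PolarizedBT1Space p k g} {v v' : ℕ → ℕ} {hv : VT g v} {hv' : VT g v'}
    {x : Fin (2 * g) → X.M} (hx : X.Std hv x) {y : Fin (2 * g) → Y.M} (hy : Y.Std hv' y)
    (hvv : ∀ i, i ≤ 2 * g → v i = v' i) : X.Iso Y := by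
  obtain ⟨b, hb⟩ := hx.exists_basis
  obtain ⟨c, hc⟩ := hy.exists_basis
  have he : ∀ i : Fin (2 * g), eps v i ↔ eps v' i := by
    intro i; unfold eps; rw [hvv _ (by omega), hvv _ (by omega)]
  have hp : ∀ i, hv.perm i = hv'.perm i := by
    intro i
    apply Fin.ext
    by_cases h : eps v i
    · rw [hv.perm_eps h, hv'.perm_eps ((he i).mp h), hvv _ (by omega)]
    · rw [hv.perm_neps h, hv'.perm_neps (fun hh => h ((he i).mpr hh)), hvv _ (by omega)]
  let α := b.equiv c (Equiv.refl _)
  have hα : ∀ i, α (x i) = y i := by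
    intro i; rw [← hb, ← hc]; simp [α]
  have hspan : ∀ P : X.M → Prop, P 0 → (∀ u w, P u → P w → P (u + w)) → (∀ (a : k) u, P u → P (a • u)) →
      (∀ i, P (x i)) → ∀ u, P u := by
    intro P h0 ha hs hx u
    have hu : u ∈ Submodule.span k (Set.range b) := by rw [b.span_eq]; trivial
    induction hu using Submodule.span_induction with
    | mem u h => obtain ⟨i, rfl⟩ := h; rw [hb]; exact hx i
    | zero => exact h0
    | add u w _ _ h1 h2 => exact ha _ _ h1 h2
    | smul a u _ h => exact hs a u h
  refine ⟨α, ?_, ?_, ?_⟩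
  · refine hspan _ ?_ ?_ ?_ ?_
    · simp
    · intro u w h1 h2; simp only [map_add, h1, h2]
    · intro a u h; simp only [map_smulₛₗ, h, RingHom.id_apply]
    · intro i
      obtain ⟨i, rfl⟩ := hv.perm.surjective i
      rw [hα]
      by_cases h : eps v i
      · rw [hx.F0 h, hp, hy.F0 ((he i).mp h), map_zero]
      · rw [hx.F i h, hp, hy.F i (fun hh => h ((he i).mpr hh)), map_smul, hα]
  · refine hspan _ ?_ ?_ ?_ ?_
    · simp
    · intro u w h1 h2; simp only [map_add, h1, h2]
    · intro a u h; simp only [map_smulₛₗ, h, RingHom.id_apply]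
    · intro i
      rw [hα]
      by_cases h : eps v i
      · rw [hx.V i h, hy.V i ((he i).mp h), hα, hp]
      · rw [hx.V0 h, hy.V0 (fun hh => h ((he i).mpr hh)), map_zero]
  · refine hspan _ ?_ ?_ ?_ ?_
    · simp
    · intro u w h1 h2 z; simp only [map_add, LinearMap.add_apply, h1, h2]
    · intro a u h z; simp only [map_smul, LinearMap.smul_apply, h]
    · intro i
      refine hspan _ ?_ ?_ ?_ ?_
      · simp
      · intro u w h1 h2; simp only [map_add, h1, h2]
      · intro a u h; simp only [map_smul, h]
      · intro j
        rw [hα, hα]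
        by_cases h : j = Fin.rev i
        · subst h; rw [hx.B, hy.B]
        · rw [hx.B0 i j h, hy.B0 i j h]

end PolarizedBT1Space

open Module Polynomial
set_option linter.unusedSectionVars false

namespace PolarizedBT1Space
variable {p : ℕ} [Fact p.Prime] {k : Type} [Field k] [CharP k p] [PerfectRing k p] {g : ℕ}
variable {X : PolarizedBT1Space p k g}

theorem GFlag.exists_pull {Y : PolarizedBT1Space p k g} (h : X.Iso Y) (Γ : Y.GFlag g) :
    ∃ Δ : X.GFlag g, Δ.v = Γ.v := by
  obtain ⟨α, hF, hV, hB⟩ := h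
  refine ⟨⟨fun i => (Γ.W i).comap α.toLinearMap, Γ.v, ?_, ?_, ?_, Γ.hv, ?_, ?_, ?_⟩, rfl⟩
  · intro i j hij hj
    have h1 := Γ.lt i j hij hj
    refine lt_of_le_of_ne (Submodule.comap_mono h1.le) fun h => h1.ne ?_
    exact Submodule.comap_injective_of_surjective (f := α.toLinearMap) α.surjective h
  · ext x; simp [Γ.W0]
  · ext x; simp [Γ.Wt]
  · intro i hi
    ext x
    rw [Submodule.mem_comap, ← Γ.hV i hi]
    constructor
    · rintro ⟨y, hy, rfl⟩
      exact ⟨α y, hy, (hV y).symm⟩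
    · rintro ⟨z, hz, hzx⟩
      refine ⟨α.symm z, ?_, ?_⟩
      · show α (α.symm z) ∈ Γ.W i
        rw [α.apply_symm_apply]; exact hz
      · apply α.injective
        rw [hV, α.apply_symm_apply]; exact hzx
  · intro i hi
    ext x
    rw [Submodule.mem_comap, Submodule.mem_comap, Submodule.mem_comap, ← Γ.hF i hi, Submodule.mem_comap]
    show α (X.F x) ∈ _ ↔ Y.F (α x) ∈ _
    rw [hF]
  · intro i hi
    ext x
    rw [Submodule.mem_comap, ← Γ.ho i hi, mem_orth, mem_orth]
    constructor
    · intro h z hz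
      have := h (α.symm z) (by show α (α.symm z) ∈ Γ.W i; rw [α.apply_symm_apply]; exact hz)
      rw [← hB, α.apply_symm_apply] at this
      exact this
    · intro h z hz
      rw [← hB]; exact h _ hz

theorem GFlag.v_unique (Γ Γ' : X.GFlag g) : ∀ i, i ≤ 2 * g → Γ.v i = Γ'.v i := by
  have same : ∀ i j, i ≤ 2 * g → j ≤ 2 * g → Γ.W i = Γ'.W j → i = j := by
    intro i j hi hj h
    rw [← Γ.finrank_eq hi, ← Γ'.finrank_eq hj, h]
  let C : Set (Submodule k X.M) := {A | ∃ i, i ≤ 2 * g ∧ A = Γ.W i ∧ A = Γ'.W i}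
  have mk : ∀ A i j, i ≤ 2 * g → j ≤ 2 * g → A = Γ.W i → A = Γ'.W j → A ∈ C := by
    intro A i j hi hj h1 h2
    have := same i j hi hj (h1.symm.trans h2)
    subst this
    exact ⟨i, hi, h1, h2⟩
  obtain ⟨l, Δ, hΔ⟩ := X.chain_flag C (by
      rintro A ⟨i, hi, h1, -⟩ D ⟨j, hj, h2, -⟩ _
      rw [h1, h2]
      rcases le_total i j with h | h
      · exact Or.inl ((Γ.le_iff hi hj).mpr h)
      · exact Or.inr ((Γ.le_iff hj hi).mpr h))
    (mk _ 0 0 (by omega) (by omega) Γ.W0.symm Γ'.W0.symm)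
    (mk _ (2 * g) (2 * g) le_rfl le_rfl Γ.Wt.symm Γ'.Wt.symm)
    (by
      rintro A ⟨i, hi, h1, h2⟩
      have a1 := Γ.hv.le_l hi
      have a2 := Γ'.hv.le_l hi
      exact mk _ (Γ.v i) (Γ'.v i) (by omega) (by omega) (by rw [h1, Γ.hV i hi]) (by rw [h2, Γ'.hV i hi]))
    (by
      rintro A ⟨i, hi, h1, h2⟩
      have a1 := Γ.hv.sub_le hi
      have a2 := Γ'.hv.sub_le hi
      have a3 := (Γ.hv.mono hi le_rfl).2
      have a4 := (Γ'.hv.mono hi le_rfl).2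
      rw [Γ.hv.top] at a3
      rw [Γ'.hv.top] at a4
      exact mk _ (g + i - Γ.v i) (g + i - Γ'.v i) (by omega) (by omega)
        (by rw [h1, Γ.hF i hi]) (by rw [h2, Γ'.hF i hi]))
    (by
      rintro A ⟨i, hi, h1, h2⟩
      exact mk _ (2 * g - i) (2 * g - i) (by omega) (by omega)
        (by rw [h1, Γ.ho i hi]) (by rw [h2, Γ'.ho i hi]))
  have hidx : ∀ j, j ≤ 2 * l → ∃ i, i ≤ 2 * g ∧ Δ.W j = Γ.W i ∧ Δ.W j = Γ'.W i :=
    fun j hj => (hΔ _).mpr ⟨j, hj, rfl⟩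
  have key : ∀ j, j ≤ 2 * l → ∀ a, a ≤ 2 * g → Δ.W j = Γ.W a → Δ.W j = Γ'.W a →
      ∀ i, i ≤ a → Γ.v i = Γ'.v i := by
    intro j
    induction j with
    | zero =>
      intro _ a ha h1 _ i hi
      have : a = 0 := Γ.inj ha (by omega) (by rw [← h1, Δ.W0, Γ.W0])
      have : i = 0 := by omega
      subst this
      rw [Γ.hv.zero, Γ'.hv.zero]
    | succ j ih =>
      intro hj b hb hb1 hb2 i hi
      obtain ⟨a, ha, ha1, ha2⟩ := hidx j (by omega)
      have ih' := ih (by omega) a ha ha1 ha2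
      by_cases hia : i ≤ a
      · exact ih' i hia
      have hva := ih' a le_rfl
      have m1 := Γ.hv.mono (i := a) (j := i) (by omega) (by omega)
      have m2 := Γ.hv.mono hi hb
      have m1' := Γ'.hv.mono (i := a) (j := i) (by omega) (by omega)
      have m2' := Γ'.hv.mono hi hb
      have la := Γ.hv.le_l ha
      have lb := Γ.hv.le_l hb
      have la' := Γ'.hv.le_l ha
      have lb' := Γ'.hv.le_l hb
      rcases Δ.hv.step j (by omega) with h | h
      · have e : (Δ.W j).map X.V = (Δ.W (j+1)).map X.V := by
          rw [Δ.hV _ (by omega), Δ.hV _ (by omega), h]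
        have e1 : Γ.v a = Γ.v b := Γ.inj (by omega) (by omega) (by
          rw [← Γ.hV a ha, ← Γ.hV b hb, ← ha1, ← hb1, e])
        have e2 : Γ'.v a = Γ'.v b := Γ'.inj (by omega) (by omega) (by
          rw [← Γ'.hV a ha, ← Γ'.hV b hb, ← ha2, ← hb2, e])
        omega
      · have e : (Δ.W j).comap X.F = (Δ.W (j+1)).comap X.F := by
          rw [Δ.hF _ (by omega), Δ.hF _ (by omega), h]
          congr 1; omega
        have a3 := (Γ.hv.mono ha le_rfl).2
        have a4 := (Γ'.hv.mono ha le_rfl).2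
        have b3 := (Γ.hv.mono hb le_rfl).2
        have b4 := (Γ'.hv.mono hb le_rfl).2
        rw [Γ.hv.top] at a3 b3
        rw [Γ'.hv.top] at a4 b4
        have e1 : g + a - Γ.v a = g + b - Γ.v b := Γ.inj (by omega) (by omega) (by
          rw [← Γ.hF a ha, ← Γ.hF b hb, ← ha1, ← hb1, e])
        have e2 : g + a - Γ'.v a = g + b - Γ'.v b := Γ'.inj (by omega) (by omega) (by
          rw [← Γ'.hF a ha, ← Γ'.hF b hb, ← ha2, ← hb2, e])
        omega
  exact key (2 * l) le_rfl (2 * g) le_rfl (by rw [Δ.Wt, Γ.Wt]) (by rw [Δ.Wt, Γ'.Wt])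

/-! the model -/

section model
variable (p k)
variable {v : ℕ → ℕ} (hv : VT g v)

/-- F -/
noncomputable def modF : (Fin (2 * g) → k) →ₛₗ[frobenius k p] (Fin (2 * g) → k) where
  toFun x i := if eps v i then 0 else - sg k i * x (hv.perm i) ^ p
  map_add' x y := by
    funext i
    simp only [Pi.add_apply]
    split_ifs
    · simp
    · rw [add_pow_char]; ring
  map_smul' a x := by
    funext i
    simp only [Pi.smul_apply, smul_eq_mul, frobenius_def]
    split_ifs
    · simp
    · rw [mul_pow]; ring

/-- V -/
noncomputable def modV : (Fin (2 * g) → k) →ₛₗ[((frobeniusEquiv k p).symm : k →+* k)] (Fin (2 * g) → k) where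
  toFun x j := if eps v (hv.perm.symm j) then ((frobeniusEquiv k p).symm : k →+* k) (x (hv.perm.symm j)) else 0
  map_add' x y := by
    funext i
    simp only [Pi.add_apply]
    split_ifs
    · rw [map_add]
    · simp
  map_smul' a x := by
    funext i
    simp only [Pi.smul_apply, smul_eq_mul]
    split_ifs
    · rw [map_mul]
    · simp

/-- B -/
def modB (g : ℕ) : (Fin (2 * g) → k) →ₗ[k] (Fin (2 * g) → k) →ₗ[k] k :=
  LinearMap.mk₂ k (fun x y => ∑ i, sg k i * x i * y (Fin.rev i))
    (fun x x' y => by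
      rw [← Finset.sum_add_distrib]; refine Finset.sum_congr rfl fun i _ => ?_
      simp only [Pi.add_apply]; ring)
    (fun a x y => by
      rw [Finset.smul_sum]; refine Finset.sum_congr rfl fun i _ => ?_
      simp only [Pi.smul_apply, smul_eq_mul]; ring)
    (fun x y y' => by
      rw [← Finset.sum_add_distrib]; refine Finset.sum_congr rfl fun i _ => ?_
      simp only [Pi.add_apply]; ring)
    (fun a x y => by
      rw [Finset.smul_sum]; refine Finset.sum_congr rfl fun i _ => ?_
      simp only [Pi.smul_apply, smul_eq_mul]; ring)

theorem modF_eps (x : Fin (2 * g) → k) {i : Fin (2 * g)} (h : eps v i) : modF p k hv x i = 0 := if_pos h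
theorem modF_neps (x : Fin (2 * g) → k) {i : Fin (2 * g)} (h : ¬ eps v i) :
    modF p k hv x i = - sg k i * x (hv.perm i) ^ p := if_neg h
theorem modV_eps (x : Fin (2 * g) → k) {i : Fin (2 * g)} (h : eps v i) :
    modV p k hv x (hv.perm i) = ((frobeniusEquiv k p).symm : k →+* k) (x i) := by
  show (if eps v (hv.perm.symm (hv.perm i)) then _ else _) = _
  rw [Equiv.symm_apply_apply, if_pos h]
theorem modV_neps (x : Fin (2 * g) → k) {i : Fin (2 * g)} (h : ¬ eps v i) :
    modV p k hv x (hv.perm i) = 0 := by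
  show (if eps v (hv.perm.symm (hv.perm i)) then _ else _) = _
  rw [Equiv.symm_apply_apply, if_neg h]
theorem modB_apply (x y : Fin (2 * g) → k) : modB k g x y = ∑ i, sg k i * x i * y (Fin.rev i) := rfl

theorem modB_single (x : Fin (2 * g) → k) (i : Fin (2 * g)) :
    modB k g x (Pi.single (Fin.rev i) 1) = sg k i * x i := by
  rw [modB_apply, Finset.sum_eq_single i]
  · simp
  · intro j _ hj
    rw [Pi.single_eq_of_ne, mul_zero]
    exact fun h => hj (Fin.rev_injective h)
  · intro h; exact absurd (Finset.mem_univ _) h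

theorem modB_single' (y : Fin (2 * g) → k) (i : Fin (2 * g)) :
    modB k g (Pi.single i 1) y = sg k i * y (Fin.rev i) := by
  rw [modB_apply, Finset.sum_eq_single i]
  · simp
  · intro j _ hj
    rw [Pi.single_eq_of_ne hj, mul_zero, zero_mul]
  · intro h; exact absurd (Finset.mem_univ _) h

/-- model -/
noncomputable def model : PolarizedBT1Space p k g where
  M := Fin (2 * g) → k
  hdim := by simp
  F := modF p k hv
  V := modV p k hv
  hFV := by
    have hp0 : p ≠ 0 := (Fact.out : p.Prime).ne_zero
    ext y
    rw [LinearMap.mem_ker, LinearMap.mem_range]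
    constructor
    · intro h
      refine ⟨fun i => y (hv.perm i) ^ p, ?_⟩
      funext j
      obtain ⟨i, rfl⟩ := hv.perm.surjective j
      by_cases hi : eps v i
      · rw [modV_eps p k hv _ hi, tau_pow]
      · rw [modV_neps p k hv _ hi]
        have h1 := congrFun h i
        rw [modF_neps p k hv _ hi] at h1
        exact (pow_p_zero.mp ((mul_eq_zero.mp h1).resolve_left (neg_ne_zero.mpr (sg_ne i)))).symm
    · rintro ⟨x, rfl⟩
      funext i
      by_cases hi : eps v i
      · rw [modF_eps p k hv _ hi]; rfl
      · rw [modF_neps p k hv _ hi, modV_neps p k hv _ hi, zero_pow hp0, mul_zero]; rfl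
  hVF := by
    ext y
    rw [LinearMap.mem_ker, LinearMap.mem_range]
    constructor
    · intro h
      refine ⟨fun j => ((frobeniusEquiv k p).symm : k →+* k)
        (- sg k (hv.perm.symm j) * y (hv.perm.symm j)), ?_⟩
      funext i
      by_cases hi : eps v i
      · rw [modF_eps p k hv _ hi]
        have h1 := congrFun h (hv.perm i)
        rw [modV_eps p k hv _ hi] at h1
        exact ((map_eq_zero _).mp h1).symm
      · rw [modF_neps p k hv _ hi, tau_pow', Equiv.symm_apply_apply]
        linear_combination y i * sg_mul (k := k) i
    · rintro ⟨x, rfl⟩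
      funext j
      obtain ⟨i, rfl⟩ := hv.perm.surjective j
      by_cases hi : eps v i
      · rw [modV_eps p k hv _ hi, modF_eps p k hv _ hi, map_zero]; rfl
      · rw [modV_neps p k hv _ hi]; rfl
  B := modB k g
  halt := by
    intro x
    rw [modB_apply]
    refine Finset.sum_involution (fun i _ => Fin.rev i) ?_ ?_ ?_ ?_
    · intro i _; rw [Fin.rev_rev, sg_rev]; ring
    · intro i _ _ h
      have h1 := congrArg Fin.val h
      rw [Fin.val_rev] at h1
      omega
    · intro i _; exact Finset.mem_univ _
    · intro i _; exact Fin.rev_rev i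
  hnondeg := by
    intro x h
    funext i
    have h1 := h (Pi.single (Fin.rev i) 1)
    rw [modB_single] at h1
    exact (mul_eq_zero.mp h1).resolve_left (sg_ne i)
  hcompat := by
    intro x y
    rw [modB_apply, modB_apply, sum_pow_char,
      ← Equiv.sum_comp hv.perm (fun i => (sg k i * x i * modV p k hv y (Fin.rev i)) ^ p)]
    refine Finset.sum_congr rfl fun i _ => ?_
    rw [← hv.perm_rev, mul_pow, mul_pow, sg_pow]
    by_cases hi : eps v i
    · have hi' : ¬ eps v (Fin.rev i) := fun h => (hv.eps_rev i).mp h hi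
      rw [modF_eps p k hv _ hi, modV_neps p k hv _ hi', zero_pow (Fact.out : p.Prime).ne_zero]
      ring
    · have hi' := (hv.eps_rev i).mpr hi
      rw [modF_neps p k hv _ hi, modV_eps p k hv _ hi', tau_pow', sg_neps hv hi]
      linear_combination (- x (hv.perm i) ^ p * y (Fin.rev i)) * sg_mul (k := k) i

/-- flag of the model -/
def modW (g i : ℕ) : Submodule k (Fin (2 * g) → k) where
  carrier := {x | ∀ j : Fin (2 * g), i ≤ (j : ℕ) → x j = 0}
  add_mem' := fun {x y} hx hy j hj => by rw [Pi.add_apply, hx j hj, hy j hj, add_zero]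
  zero_mem' := fun _ _ => rfl
  smul_mem' := fun a x hx j hj => by rw [Pi.smul_apply, hx j hj, smul_zero]

theorem mem_modW {i : ℕ} {x : Fin (2 * g) → k} :
    x ∈ modW k g i ↔ ∀ j : Fin (2 * g), i ≤ (j : ℕ) → x j = 0 := Iff.rfl

theorem single_mem {i : ℕ} {j : Fin (2 * g)} (h : (j : ℕ) < i) : (Pi.single j 1 : Fin (2 * g) → k) ∈ modW k g i := by
  intro l hl
  rw [Pi.single_eq_of_ne]
  rintro rfl
  omega

/-- the flag -/
noncomputable def modFlag : (model p k hv).GFlag g where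
  W := fun i => modW k g i
  v := v
  lt := by
    intro i j hij hj
    refine lt_of_le_of_ne (fun x hx l hl => hx l (by omega)) fun h => ?_
    have h1 : (Pi.single (⟨i, by omega⟩ : Fin (2 * g)) 1 : Fin (2 * g) → k) ∈ modW k g j := single_mem k hij
    have h2 : (Pi.single (⟨i, by omega⟩ : Fin (2 * g)) 1 : Fin (2 * g) → k) ∈ modW k g i := by
      have h3 : modW k g i = modW k g j := h
      rw [h3]; exact h1
    have := h2 ⟨i, by omega⟩ le_rfl
    simp at this
  W0 := by
    refine (Submodule.eq_bot_iff _).mpr fun x hx => ?_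
    funext j
    exact hx j (Nat.zero_le _)
  Wt := by
    refine (Submodule.eq_top_iff').mpr fun x j hj => ?_
    exact absurd j.2 (by omega)
  hv := hv
  hV := by
    intro i hi
    show (modW k g i).map (modV p k hv) = modW k g (v i)
    ext y
    rw [Submodule.mem_map]
    constructor
    · rintro ⟨x, hx, rfl⟩ j hj
      obtain ⟨l, rfl⟩ := hv.perm.surjective j
      by_cases hl : eps v l
      · rw [modV_eps p k hv _ hl, hx, map_zero]
        rw [hv.perm_eps hl] at hj
        by_contra hc
        have h1 := hv.mono (i := l + 1) (j := i) (by omega) hi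
        have h2 : v (l + 1) = v l + 1 := hl
        omega
      · rw [modV_neps p k hv _ hl]
    · intro hy
      refine ⟨fun l => if eps v l then y (hv.perm l) ^ p else 0, ?_, ?_⟩
      · intro l hl
        by_cases h : eps v l
        · show (if eps v l then _ else _) = _
          rw [if_pos h, hy, zero_pow (Fact.out : p.Prime).ne_zero]
          rw [hv.perm_eps h]
          exact (hv.mono hl (by omega)).1
        · exact if_neg h
      · funext j
        obtain ⟨l, rfl⟩ := hv.perm.surjective j
        by_cases hl : eps v l
        · rw [modV_eps p k hv _ hl, if_pos hl, tau_pow]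
        · rw [modV_neps p k hv _ hl, hy]
          have := (hv.perm_lt_iff l).not.mpr hl
          have := hv.le_l hi
          omega
  hF := by
    intro i hi
    show (modW k g i).comap (modF p k hv) = modW k g (g + i - v i)
    have hvi := hv.le_self hi
    ext x
    rw [Submodule.mem_comap]
    constructor
    · intro h j hj
      obtain ⟨l, rfl⟩ := hv.perm.surjective j
      have hl : ¬ eps v l := by
        rw [← hv.perm_lt_iff l]; omega
      rw [hv.perm_neps hl] at hj
      have h1 := h l (by
        by_contra hc
        have h1 := hv.mono (i := l + 1) (j := i) (by omega) hi
        have h2 := hv.step_neps hl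
        have h3 := hv.le_self (i := l) (by omega)
        omega)
      rw [modF_neps p k hv _ hl] at h1
      exact pow_p_zero.mp ((mul_eq_zero.mp h1).resolve_left (neg_ne_zero.mpr (sg_ne l)))
    · intro hx l hl
      by_cases h : eps v l
      · exact modF_eps p k hv _ h
      · rw [modF_neps p k hv _ h, hx, zero_pow (Fact.out : p.Prime).ne_zero, mul_zero]
        rw [hv.perm_neps h]
        have := hv.mono hl (by omega)
        omega
  ho := by
    intro i hi
    ext y
    suffices H : ∀ y : Fin (2 * g) → k, (∀ x ∈ modW k g i, modB k g x y = 0) ↔ y ∈ modW k g (2 * g - i) from H y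
    clear y
    intro y
    constructor
    · intro h j hj
      have h1 := h (Pi.single (Fin.rev j) 1) (single_mem k (by rw [Fin.val_rev]; omega))
      rw [modB_single', Fin.rev_rev] at h1
      exact (mul_eq_zero.mp h1).resolve_left (sg_ne _)
    · intro hy x hx
      rw [modB_apply]
      refine Finset.sum_eq_zero fun j _ => ?_
      by_cases hj : i ≤ (j : ℕ)
      · rw [hx j hj]; ring
      · rw [hy (Fin.rev j) (by rw [Fin.val_rev]; omega), mul_zero]

theorem modFlag_v : (modFlag p k hv).v = v := rfl

end model

theorem exists_VT (b : Fin g → Bool) : ∃ v, VT g v ∧ ∀ i : Fin g, decide (eps v i) = b i := by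
  classical
  let P : ℕ → Prop := fun j => ∃ h : j < g, b ⟨j, h⟩ = true
  let c : ℕ → ℕ := fun i => Nat.count P i
  have c0 : c 0 = 0 := Nat.count_zero _
  have cs : ∀ i, c (i+1) = c i + if P i then 1 else 0 := fun i => Nat.count_succ _ _
  let v : ℕ → ℕ := fun i => if i ≤ g then c i else (i - g) + c (2 * g - i)
  have v1 : ∀ i, i ≤ g → v i = c i := fun i h => if_pos h
  have v2 : ∀ i, g ≤ i → v i = (i - g) + c (2 * g - i) := by
    intro i h
    by_cases h1 : i ≤ g
    · have : i = g := le_antisymm h1 h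
      subst this
      rw [v1 i h1]
      have : 2 * i - i = i := by omega
      rw [this]; omega
    · exact if_neg h1
  have cs' : ∀ i, c (i+1) = c i ∨ c (i+1) = c i + 1 := by
    intro i; rw [cs]; split_ifs
    · exact Or.inr rfl
    · exact Or.inl rfl
  refine ⟨v, ⟨?_, ?_, ?_⟩, ?_⟩
  · rw [v1 0 (by omega), c0]
  · intro i hi
    by_cases h : i < g
    · rw [v1 i (by omega), v1 (i+1) (by omega)]; exact cs' i
    · rw [v2 i (by omega), v2 (i+1) (by omega)]
      have e : 2 * g - i = (2 * g - (i+1)) + 1 := by omega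
      rw [e]
      have := cs' (2 * g - (i+1))
      omega
  · intro i hi
    by_cases h : i ≤ g
    · rw [v1 i h, v2 _ (by omega)]
      have e : 2 * g - (2 * g - i) = i := by omega
      rw [e]; omega
    · rw [v2 i (by omega), v1 _ (by omega)]; omega
  · intro i
    have h1 : eps v i ↔ b i = true := by
      unfold eps
      rw [v1 i (by omega), v1 (i+1) (by omega), cs]
      by_cases h : P i
      · rw [if_pos h]
        obtain ⟨_, h⟩ := h
        exact ⟨fun _ => h, fun _ => rfl⟩
      · rw [if_neg h]
        constructor
        · intro h; omega
        · intro hb; exact absurd ⟨i.2, hb⟩ h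
    by_cases h : b i = true
    · rw [h]; exact decide_eq_true (h1.mpr h)
    · have h' : b i = false := by simpa using h
      rw [h']; exact decide_eq_false (fun hh => h (h1.mp hh))

theorem VT_ext {v v' : ℕ → ℕ} (hv : VT g v) (hv' : VT g v') (h : ∀ i : Fin g, eps v i ↔ eps v' i) :
    ∀ i, i ≤ 2 * g → v i = v' i := by
  have low : ∀ i, i ≤ g → v i = v' i := by
    intro i
    induction i with
    | zero => intro _; rw [hv.zero, hv'.zero]
    | succ i ih =>
      intro hi
      have e := ih (by omega)
      have h1 := hv.step i (by omega)
      have h2 := hv'.step i (by omega)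
      have h3 := h ⟨i, by omega⟩
      unfold eps at h3
      simp only at h3
      omega
  intro i hi
  by_cases h1 : i ≤ g
  · exact low i h1
  · have h2 := hv.sym i hi
    have h3 := hv'.sym i hi
    have h4 := low (2 * g - i) (by omega)
    omega

/-- type of X -/
noncomputable def typ [IsAlgClosed k] (X : PolarizedBT1Space p k g) : Fin g → Bool :=
  fun i => decide (eps (Classical.choice X.exists_full).v i)

theorem typ_eq [IsAlgClosed k] (X : PolarizedBT1Space p k g) (Γ : X.GFlag g) (i : Fin g) :
    X.typ i = decide (eps Γ.v i) := by
  have h := GFlag.v_unique (Classical.choice X.exists_full) Γ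
  unfold typ
  congr 1
  unfold eps
  rw [h i (by omega), h (i+1) (by omega)]

theorem typ_iso [IsAlgClosed k] {X Y : PolarizedBT1Space p k g} (h : X.Iso Y) : X.typ = Y.typ := by
  obtain ⟨Γ⟩ := Y.exists_full
  obtain ⟨Δ, hΔ⟩ := GFlag.exists_pull h Γ
  funext i
  rw [typ_eq X Δ, typ_eq Y Γ, hΔ]

theorem iso_of_typ [IsAlgClosed k] {X Y : PolarizedBT1Space p k g} (h : X.typ = Y.typ) : X.Iso Y := by
  obtain ⟨Γ⟩ := X.exists_full
  obtain ⟨Δ⟩ := Y.exists_full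
  obtain ⟨x, hx⟩ := Γ.exists_std
  obtain ⟨y, hy⟩ := Δ.exists_std
  refine hx.iso hy (VT_ext Γ.hv Δ.hv fun i => ?_)
  have := congrFun h i
  rw [typ_eq X Γ, typ_eq Y Δ] at this
  exact decide_eq_decide.mp this

end PolarizedBT1Space

theorem card_isoClasses_polarizedBT1 (p : ℕ) [Fact p.Prime] (k : Type) [Field k] [CharP k p]
    [PerfectRing k p] [IsAlgClosed k] (g : ℕ) (hg : 1 ≤ g) :
    Nat.card (Quot (PolarizedBT1Space.Iso (p := p) (k := k) (g := g))) = 2 ^ g := by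
  let φ : Quot (PolarizedBT1Space.Iso (p := p) (k := k) (g := g)) → (Fin g → Bool) :=
    Quot.lift PolarizedBT1Space.typ fun X Y h => PolarizedBT1Space.typ_iso h
  have hφ : Function.Bijective φ := by
    constructor
    · intro a b hab
      induction a using Quot.ind with | _ X =>
      induction b using Quot.ind with | _ Y =>
      exact Quot.sound (PolarizedBT1Space.iso_of_typ hab)
    · intro b
      obtain ⟨v, hv, hb⟩ := PolarizedBT1Space.exists_VT b
      refine ⟨Quot.mk _ (PolarizedBT1Space.model p k hv), ?_⟩
      funext i
      show (PolarizedBT1Space.model p k hv).typ i = b i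
      rw [PolarizedBT1Space.typ_eq _ (PolarizedBT1Space.modFlag p k hv), ← hb i]
      rfl
  rw [Nat.card_eq_of_bijective φ hφ]
  simp
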